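/- arXiv:2304.07798 — 2 statements merged into one kernel-verified Lean document; each statement's English description precedes it below -/
import Mathlib

section
/- Assume G is an elementary abelian 2-group and the characteristic of F is 2. Then there is a surjective F-algebra homomorphism from the Terwilliger F-algebra T onto M₅(F) × M₄(F) × F whose kernel K is a nilpotent two-sided ideal of T (there exists m ≥ 1 such that any product of m elements of K equals the zero matrix). Consequently T/Rad T ≅ M₅(F) ⊕ M₄(F) ⊕ M₁(F) as F-algebras, where Rad T = K is the Jacobson radical of T. -/
open Matrix

abbrev XG (G : Type) [Group G] : Type := {v : Fin 3 → G // v 0 * v 1 = v 2}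

def cIdx : Fin 5 → Fin 3
  | 0 => 0
  | 1 => 0
  | 2 => 1
  | 3 => 2
  | 4 => 0

def rel {G : Type} [Group G] (i : Fin 5) (y z : XG G) : Prop :=
  if i = 0 then y = z
  else if i = 4 then ∀ d : Fin 3, y.1 d ≠ z.1 d
  else y ≠ z ∧ y.1 (cIdx i) = z.1 (cIdx i)

instance {G : Type} [Group G] [DecidableEq G] (i : Fin 5) (y z : XG G) :
    Decidable (rel i y z) := by
  unfold rel
  infer_instance

def Adj (F : Type) [Field F] {G : Type} [Group G] [DecidableEq G] (i : Fin 5) :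
    Matrix (XG G) (XG G) F :=
  Matrix.of fun y z => if rel i y z then 1 else 0

def DualE (F : Type) [Field F] {G : Type} [Group G] [DecidableEq G] (x : XG G) (i : Fin 5) :
    Matrix (XG G) (XG G) F :=
  Matrix.of fun y z => if y = z ∧ rel i x y then 1 else 0

def AllOne (F : Type) [Field F] (G : Type) [Group G] : Matrix (XG G) (XG G) F :=
  Matrix.of fun _ _ => 1

def genSet (F : Type) [Field F] (G : Type) [Group G] [Fintype G] [DecidableEq G]
    (x : XG G) : Set (Matrix (XG G) (XG G) F) :=
  {M | ∃ a b c : Fin 5, M = DualE F x a * Adj F b * DualE F x c}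

def TerwilligerAlg (F : Type) [Field F] (G : Type) [Group G] [Fintype G] [DecidableEq G]
    (x : XG G) : Subalgebra F (Matrix (XG G) (XG G) F) :=
  Algebra.adjoin F (genSet F G x)

set_option linter.all false
set_option linter.unusedSectionVars false
set_option linter.unusedSimpArgs false
namespace Aux17
open scoped Kronecker

section Abstract
variable {F : Type} [Field F]

/-- projection on the last three indices -/
def piM (F : Type) [Field F] : Matrix (Fin 7) (Fin 7) F := Matrix.diagonal ![0,0,0,0,1,1,1]
def SJ (F : Type) [Field F] : Matrix (Fin 7) (Fin 7) F := Matrix.diagonal ![1,1,1,1,0,0,0]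
def SK (F : Type) [Field F] : Matrix (Fin 7) (Fin 7) F :=
  !![0,0,0,0,0,0,0; 0,1,0,0,0,0,0; 0,0,1,0,0,0,0; 0,0,0,1,0,0,0;
     0,0,0,0,0,1,1; 0,0,0,0,1,0,1; 0,0,0,0,1,1,0]
def L4 (F : Type) [Field F] : Matrix (Fin 7) (Fin 4) F :=
  !![1,0,0,0; 0,1,0,0; 0,0,1,0; 0,0,0,1; 0,0,0,0; 0,0,0,0; 0,0,0,0]
def L5 (F : Type) [Field F] : Matrix (Fin 7) (Fin 5) F :=
  !![0,0,0,0,0; 1,0,0,0,0; 0,1,0,0,0; 0,0,1,0,0; 0,0,0,1,0; 0,0,0,0,1; 0,0,0,0,0]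
def N5 (F : Type) [Field F] : Matrix (Fin 5) (Fin 5) F :=
  !![1,0,0,0,0; 0,1,0,0,0; 0,0,1,0,0; 0,0,0,0,1; 0,0,0,1,0]
def P5 (F : Type) [Field F] : Matrix (Fin 7) (Fin 7) F :=
  !![0,0,0,0,0,0,0; 0,1,0,0,0,0,0; 0,0,1,0,0,0,0; 0,0,0,1,0,0,0;
     0,0,0,0,0,1,0; 0,0,0,0,1,0,0; 0,0,0,0,0,0,0]
def D3 (F : Type) [Field F] : Matrix (Fin 7) (Fin 7) F := Matrix.diagonal ![0,1,1,1,0,0,0]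

lemma pi_pi : piM F * piM F = piM F := by
  rw [piM, Matrix.diagonal_mul_diagonal]; congr 1; ext i; fin_cases i <;> simp
lemma pi_SJ : piM F * SJ F = 0 := by
  rw [piM, SJ, Matrix.diagonal_mul_diagonal, ← Matrix.diagonal_zero]
  congr 1; ext i; fin_cases i <;> simp
lemma SJ_pi : SJ F * piM F = 0 := by
  rw [piM, SJ, Matrix.diagonal_mul_diagonal, ← Matrix.diagonal_zero]
  congr 1; ext i; fin_cases i <;> simp
lemma SJ_SJ : SJ F * SJ F = SJ F := by
  rw [SJ, Matrix.diagonal_mul_diagonal]; congr 1; ext i; fin_cases i <;> simp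
lemma pi_SK : piM F * SK F = SK F * piM F := by
  ext i j
  rw [piM, Matrix.diagonal_mul, Matrix.mul_diagonal]
  fin_cases i <;> fin_cases j <;> simp [SK]
lemma SK_D3 : SK F * D3 F * SK F + SK F * piM F = SK F := by
  ext i j
  rw [piM, D3, Matrix.add_apply, Matrix.mul_diagonal, Matrix.mul_apply]
  simp only [Matrix.mul_diagonal, Fin.sum_univ_succ, Fin.sum_univ_zero]
  fin_cases i <;> fin_cases j <;> simp [SK]
lemma P4_eq : L4 F * (L4 F)ᵀ = SJ F := by
  ext i j
  simp only [Matrix.mul_apply, Fin.sum_univ_succ, Fin.sum_univ_zero]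
  fin_cases i <;> fin_cases j <;> simp [L4, SJ]
lemma P5_eq : L5 F * N5 F * (L5 F)ᵀ = P5 F := by
  ext i j
  simp only [Matrix.mul_apply, Fin.sum_univ_succ, Fin.sum_univ_zero]
  fin_cases i <;> fin_cases j <;> simp [L5, P5, N5]
def Q5 (F : Type) [Field F] : Matrix (Fin 7) (Fin 7) F :=
  !![0,0,0,0,0,0,0; 0,1,0,0,0,0,0; 0,0,1,0,0,0,0; 0,0,0,1,0,0,0;
     0,0,0,0,1,0,0; 0,0,0,0,0,1,0; 0,0,0,0,1,1,0]
lemma Q5_eq : SK F * P5 F = Q5 F := by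
  ext i j
  simp only [Matrix.mul_apply, Fin.sum_univ_succ, Fin.sum_univ_zero]
  fin_cases i <;> fin_cases j <;> simp [SK, P5, Q5]
lemma SK_P5 [CharP F 2] : SK F * P5 F * SK F = SK F := by
  have h2 : (1:F) + 1 = 0 := CharTwo.add_self_eq_zero 1
  rw [Q5_eq]
  ext i j
  simp only [Matrix.mul_apply, Fin.sum_univ_succ, Fin.sum_univ_zero]
  fin_cases i <;> fin_cases j <;> simp [SK, Q5, h2]
lemma N5_L5 : N5 F * (L5 F)ᵀ * SK F * L5 F = 1 := by
  ext i j
  simp only [Matrix.mul_apply, Fin.sum_univ_succ, Fin.sum_univ_zero]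
  fin_cases i <;> fin_cases j <;> simp [SK, N5, L5]
lemma L4_L4 : (L4 F)ᵀ * L4 F = 1 := by
  ext i j
  simp only [Matrix.mul_apply, Fin.sum_univ_succ, Fin.sum_univ_zero]
  fin_cases i <;> fin_cases j <;> simp [L4]
lemma L4_SJ_L4 : (L4 F)ᵀ * SJ F * L4 F = 1 := by
  rw [← P4_eq, ← Matrix.mul_assoc, L4_L4, Matrix.one_mul, L4_L4]

variable {X H : Type} [Fintype X] [DecidableEq X] [Fintype H] [DecidableEq H]

def JJ (F H : Type) [Field F] : Matrix H H F := Matrix.of fun _ _ => 1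
def KK (F H : Type) [Field F] [DecidableEq H] : Matrix H H F := 1 - JJ F H

def form (E : Matrix X X F) (B : Matrix X (Fin 7 × H) F) (c : F) (α β : Matrix (Fin 7) (Fin 7) F) :
    Matrix X X F :=
  c • E + B * (α ⊗ₖ JJ F H + β ⊗ₖ KK F H) * Bᵀ

structure Good (E : Matrix X X F) (B : Matrix X (Fin 7 × H) F) : Prop where
  card : (Fintype.card H : F) = 1
  EE : E * E = E
  EB : E * B = B * (piM F ⊗ₖ (1 : Matrix H H F))
  BE : Bᵀ * E = (piM F ⊗ₖ (1 : Matrix H H F)) * Bᵀ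
  gram : Bᵀ * B = SJ F ⊗ₖ JJ F H + SK F ⊗ₖ KK F H

lemma JJ_JJ (h : (Fintype.card H : F) = 1) : JJ F H * JJ F H = JJ F H := by
  ext i j; simp [JJ, Matrix.mul_apply, h]
lemma JJ_KK (h : (Fintype.card H : F) = 1) : JJ F H * KK F H = 0 := by
  rw [KK, mul_sub, JJ_JJ h]; simp
lemma KK_JJ (h : (Fintype.card H : F) = 1) : KK F H * JJ F H = 0 := by
  rw [KK, sub_mul, JJ_JJ h]; simp
lemma KK_KK (h : (Fintype.card H : F) = 1) : KK F H * KK F H = KK F H := by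
  nth_rewrite 1 [KK]; rw [sub_mul, JJ_KK h]; simp

lemma kron_mul (h : (Fintype.card H : F) = 1) (a b c d : Matrix (Fin 7) (Fin 7) F) :
    (a ⊗ₖ JJ F H + b ⊗ₖ KK F H) * (c ⊗ₖ JJ F H + d ⊗ₖ KK F H) =
      (a * c) ⊗ₖ JJ F H + (b * d) ⊗ₖ KK F H := by
  simp [add_mul, mul_add, ← Matrix.mul_kronecker_mul, JJ_JJ h, JJ_KK h, KK_JJ h, KK_KK h]

lemma kron_pi (a b : Matrix (Fin 7) (Fin 7) F) :
    (a ⊗ₖ JJ F H + b ⊗ₖ KK F H) * (piM F ⊗ₖ (1 : Matrix H H F)) =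
      (a * piM F) ⊗ₖ JJ F H + (b * piM F) ⊗ₖ KK F H := by
  simp [add_mul, ← Matrix.mul_kronecker_mul]
lemma pi_kron (a b : Matrix (Fin 7) (Fin 7) F) :
    (piM F ⊗ₖ (1 : Matrix H H F)) * (a ⊗ₖ JJ F H + b ⊗ₖ KK F H) =
      (piM F * a) ⊗ₖ JJ F H + (piM F * b) ⊗ₖ KK F H := by
  simp [mul_add, ← Matrix.mul_kronecker_mul]

variable {E : Matrix X X F} {B : Matrix X (Fin 7 × H) F}

lemma form_add (c c' : F) (α α' β β') :
    form E B c α β + form E B c' α' β' = form E B (c + c') (α + α') (β + β') := by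
  simp only [form, Matrix.add_kronecker, Matrix.mul_add, Matrix.add_mul, add_smul]
  abel
lemma form_smul (r c : F) (α β) :
    r • form E B c α β = form E B (r * c) (r • α) (r • β) := by
  simp only [form, Matrix.smul_kronecker, Matrix.mul_add, Matrix.add_mul, smul_add, smul_smul,
    Matrix.mul_smul, Matrix.smul_mul]

lemma form_mul (hg : Good E B) (c c' : F) (α α' β β') :
    form E B c α β * form E B c' α' β' =
      form E B (c * c') (c • (piM F * α') + c' • (α * piM F) + α * SJ F * α')
        (c • (piM F * β') + c' • (β * piM F) + β * SK F * β') := by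
  have h1 : E * (B * (α' ⊗ₖ JJ F H + β' ⊗ₖ KK F H) * Bᵀ) =
      B * ((piM F * α') ⊗ₖ JJ F H + (piM F * β') ⊗ₖ KK F H) * Bᵀ := by
    rw [← pi_kron, ← Matrix.mul_assoc, ← Matrix.mul_assoc, hg.EB, Matrix.mul_assoc B]
  have h2 : (B * (α ⊗ₖ JJ F H + β ⊗ₖ KK F H) * Bᵀ) * E =
      B * ((α * piM F) ⊗ₖ JJ F H + (β * piM F) ⊗ₖ KK F H) * Bᵀ := by
    rw [← kron_pi, Matrix.mul_assoc _ Bᵀ, hg.BE]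
    simp only [Matrix.mul_assoc]
  have h3 : (B * (α ⊗ₖ JJ F H + β ⊗ₖ KK F H) * Bᵀ) * (B * (α' ⊗ₖ JJ F H + β' ⊗ₖ KK F H) * Bᵀ) =
      B * ((α * SJ F * α') ⊗ₖ JJ F H + (β * SK F * β') ⊗ₖ KK F H) * Bᵀ := by
    rw [← kron_mul hg.card, ← kron_mul hg.card, ← hg.gram]
    simp only [Matrix.mul_assoc]
  have h4 : form E B c α β * form E B c' α' β' = (c * c') • E +
      (c • (B * ((piM F * α') ⊗ₖ JJ F H + (piM F * β') ⊗ₖ KK F H) * Bᵀ)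
      + c' • (B * ((α * piM F) ⊗ₖ JJ F H + (β * piM F) ⊗ₖ KK F H) * Bᵀ)
      + B * ((α * SJ F * α') ⊗ₖ JJ F H + (β * SK F * β') ⊗ₖ KK F H) * Bᵀ) := by
    rw [← h1, ← h2, ← h3, form, form, add_mul, mul_add, mul_add, Matrix.smul_mul, Matrix.mul_smul,
      hg.EE, Matrix.smul_mul, Matrix.mul_smul, smul_smul]
    abel
  rw [h4, form]
  simp only [Matrix.add_kronecker, Matrix.smul_kronecker, Matrix.mul_add, Matrix.add_mul, smul_add,
    Matrix.mul_smul, Matrix.smul_mul]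
  abel

lemma conj_form (hg : Good E B) (c : F) (α β) :
    Bᵀ * form E B c α β * B =
      (c • (SJ F * piM F) + SJ F * α * SJ F) ⊗ₖ JJ F H +
      (c • (SK F * piM F) + SK F * β * SK F) ⊗ₖ KK F H := by
  have h1 : Bᵀ * E * B = (SJ F * piM F) ⊗ₖ JJ F H + (SK F * piM F) ⊗ₖ KK F H := by
    rw [← kron_pi, ← hg.gram, Matrix.mul_assoc, hg.EB, Matrix.mul_assoc]
  have h2 : Bᵀ * (B * (α ⊗ₖ JJ F H + β ⊗ₖ KK F H) * Bᵀ) * B =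
      (SJ F * α * SJ F) ⊗ₖ JJ F H + (SK F * β * SK F) ⊗ₖ KK F H := by
    rw [← kron_mul hg.card, ← kron_mul hg.card, ← hg.gram]
    simp only [Matrix.mul_assoc]
  rw [form, Matrix.mul_add, Matrix.add_mul, h2, Matrix.mul_smul, Matrix.smul_mul, h1]
  simp only [Matrix.add_kronecker, Matrix.smul_kronecker, smul_add]
  abel

/-- extraction of the coefficient of `JJ` -/
def extJ (g : H) (M : Matrix (Fin 7 × H) (Fin 7 × H) F) : Matrix (Fin 7) (Fin 7) F :=
  Matrix.of fun k l => M (k, g) (l, g)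
def extK (g h : H) (M : Matrix (Fin 7 × H) (Fin 7 × H) F) : Matrix (Fin 7) (Fin 7) F :=
  Matrix.of fun k l => M (k, g) (l, g) - M (k, g) (l, h)

lemma extJ_kron (g : H) (α β : Matrix (Fin 7) (Fin 7) F) :
    extJ g (α ⊗ₖ JJ F H + β ⊗ₖ KK F H) = α := by
  ext k l; simp [extJ, JJ, KK]
lemma extK_kron {g h : H} (hgh : g ≠ h) (α β : Matrix (Fin 7) (Fin 7) F) :
    extK g h (α ⊗ₖ JJ F H + β ⊗ₖ KK F H) = β := by
  ext k l; simp [extK, JJ, KK, hgh]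

/-- the three components -/
def phi4 (B : Matrix X (Fin 7 × H) F) (g : H) (t : Matrix X X F) : Matrix (Fin 4) (Fin 4) F :=
  (L4 F)ᵀ * extJ g (Bᵀ * t * B) * L4 F
def phi5 (B : Matrix X (Fin 7 × H) F) (g h : H) (t : Matrix X X F) : Matrix (Fin 5) (Fin 5) F :=
  N5 F * (L5 F)ᵀ * extK g h (Bᵀ * t * B) * L5 F
def phi1 (p : X) (w : X → F) (t : Matrix X X F) : F := (t *ᵥ w) p

lemma phi4_form (hg : Good E B) (g : H) (c : F) (α β) :
    phi4 B g (form E B c α β) = (L4 F)ᵀ * (SJ F * α * SJ F) * L4 F := by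
  rw [phi4, conj_form hg, extJ_kron, SJ_pi]; simp
lemma phi5_form (hg : Good E B) {g h : H} (hgh : g ≠ h) (c : F) (α β) :
    phi5 B g h (form E B c α β) =
      N5 F * (L5 F)ᵀ * (c • (SK F * piM F) + SK F * β * SK F) * L5 F := by
  rw [phi5, conj_form hg, extK_kron hgh]
lemma phi1_form (p : X) (w : X → F) (hw : E *ᵥ w = w) (hB : Bᵀ *ᵥ w = 0) (hp : w p = 1)
    (c : F) (α β) : phi1 p w (form E B c α β) = c := by
  rw [phi1, form, Matrix.add_mulVec, ← Matrix.mulVec_mulVec, hB, Matrix.smul_mulVec, hw]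
  simp [hp]

lemma phi4_mul (hg : Good E B) (g : H) (c c' : F) (α α' β β') :
    phi4 B g (form E B c α β * form E B c' α' β') =
    phi4 B g (form E B c α β) * phi4 B g (form E B c' α' β') := by
  rw [form_mul hg, phi4_form hg, phi4_form hg, phi4_form hg]
  have h : SJ F * (c • (piM F * α') + c' • (α * piM F) + α * SJ F * α') * SJ F =
      (SJ F * α * SJ F) * (L4 F * (L4 F)ᵀ) * (SJ F * α' * SJ F) := by
    rw [P4_eq]
    have e1 : SJ F * (piM F * α') * SJ F = 0 := by rw [← Matrix.mul_assoc, SJ_pi]; simp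
    have e2 : SJ F * (α * piM F) * SJ F = 0 := by
      rw [← Matrix.mul_assoc, Matrix.mul_assoc, pi_SJ]; simp
    rw [Matrix.mul_add, Matrix.mul_add, Matrix.add_mul, Matrix.add_mul, Matrix.mul_smul,
      Matrix.mul_smul, Matrix.smul_mul, Matrix.smul_mul, e1, e2]
    have e3 : (SJ F * α * SJ F) * SJ F * (SJ F * α' * SJ F) =
      SJ F * α * (SJ F * SJ F * SJ F) * α' * SJ F := by simp only [Matrix.mul_assoc]
    rw [e3, SJ_SJ, SJ_SJ]
    simp [Matrix.mul_assoc]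
  rw [h]; simp only [Matrix.mul_assoc]

lemma phi5_mul [CharP F 2] (hg : Good E B) {g h : H} (hgh : g ≠ h) (c c' : F) (α α' β β') :
    phi5 B g h (form E B c α β * form E B c' α' β') =
    phi5 B g h (form E B c α β) * phi5 B g h (form E B c' α' β') := by
  rw [form_mul hg, phi5_form hg hgh, phi5_form hg hgh, phi5_form hg hgh]
  have h : (c * c') • (SK F * piM F) +
      SK F * (c • (piM F * β') + c' • (β * piM F) + β * SK F * β') * SK F =
      (c • (SK F * piM F) + SK F * β * SK F) * (L5 F * N5 F * (L5 F)ᵀ) *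
      (c' • (SK F * piM F) + SK F * β' * SK F) := by
    rw [P5_eq]
    have a1 : (c • (SK F * piM F) + SK F * β * SK F) = (c • piM F + SK F * β) * SK F := by
      rw [Matrix.add_mul, Matrix.smul_mul, pi_SK]
    have a2 : (c' • (SK F * piM F) + SK F * β' * SK F) = SK F * (c' • piM F + β' * SK F) := by
      rw [Matrix.mul_add, Matrix.mul_smul, Matrix.mul_assoc]
    have a3 : (c • piM F + SK F * β) * SK F * P5 F * (SK F * (c' • piM F + β' * SK F)) =
      (c • piM F + SK F * β) * (SK F * P5 F * SK F) * (c' • piM F + β' * SK F) := by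
      simp only [Matrix.mul_assoc]
    have a4 : SK F * (c • (piM F * β')) = c • (piM F * SK F * β') := by
      rw [Matrix.mul_smul, ← Matrix.mul_assoc, pi_SK]
    have a5 : piM F * (SK F * piM F) = SK F * piM F := by
      rw [← Matrix.mul_assoc, pi_SK, Matrix.mul_assoc, pi_pi]
    have a6 : SK F * (c' • (β * piM F)) * SK F = c' • (SK F * β * SK F * piM F) := by
      rw [Matrix.mul_smul, Matrix.smul_mul, Matrix.mul_assoc, Matrix.mul_assoc, pi_SK]
      simp only [Matrix.mul_assoc]
    rw [a1, a2, a3, SK_P5, Matrix.mul_add, Matrix.mul_add, Matrix.add_mul, Matrix.add_mul, a4, a6]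
    simp only [Matrix.mul_add, Matrix.add_mul, Matrix.mul_smul, Matrix.smul_mul, smul_smul, smul_add,
      Matrix.mul_assoc, a5]
    rw [mul_comm c c']
    abel
  rw [h]; simp only [Matrix.mul_assoc]

lemma nil_aux (hg : Good E B) {α₁ α₂ α₃ β₁ β₂ β₃ : Matrix (Fin 7) (Fin 7) F}
    (h1 : SJ F * α₂ * SJ F = 0) (h2 : SK F * β₂ * SK F = 0) :
    form E B 0 α₁ β₁ * (form E B 0 α₂ β₂ * form E B 0 α₃ β₃) = 0 := by
  rw [form_mul hg, form_mul hg]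
  have e1 : α₁ * SJ F * (α₂ * SJ F * α₃) = 0 := by
    have : α₁ * SJ F * (α₂ * SJ F * α₃) = α₁ * (SJ F * α₂ * SJ F) * α₃ := by
      simp only [Matrix.mul_assoc]
    rw [this, h1]; simp
  have e2 : β₁ * SK F * (β₂ * SK F * β₃) = 0 := by
    have : β₁ * SK F * (β₂ * SK F * β₃) = β₁ * (SK F * β₂ * SK F) * β₃ := by
      simp only [Matrix.mul_assoc]
    rw [this, h2]; simp
  simp [e1, e2, form]

lemma zero4 {α : Matrix (Fin 7) (Fin 7) F} (h : (L4 F)ᵀ * (SJ F * α * SJ F) * L4 F = 0) :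
    SJ F * α * SJ F = 0 := by
  have : SJ F * α * SJ F = L4 F * ((L4 F)ᵀ * (SJ F * α * SJ F) * L4 F) * (L4 F)ᵀ := by
    have : L4 F * ((L4 F)ᵀ * (SJ F * α * SJ F) * L4 F) * (L4 F)ᵀ =
      (L4 F * (L4 F)ᵀ) * (SJ F * α * SJ F) * (L4 F * (L4 F)ᵀ) := by simp only [Matrix.mul_assoc]
    rw [this, P4_eq]
    have : SJ F * (SJ F * α * SJ F) * SJ F = (SJ F * SJ F) * α * (SJ F * SJ F) := by
      simp only [Matrix.mul_assoc]
    rw [this, SJ_SJ]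
  rw [this, h]; simp

lemma zero5 [CharP F 2] {β : Matrix (Fin 7) (Fin 7) F}
    (h : N5 F * (L5 F)ᵀ * (SK F * β * SK F) * L5 F = 0) :
    SK F * β * SK F = 0 := by
  have : SK F * β * SK F = SK F * L5 F * (N5 F * (L5 F)ᵀ * (SK F * β * SK F) * L5 F) * N5 F *
      (L5 F)ᵀ * SK F := by
    have : SK F * L5 F * (N5 F * (L5 F)ᵀ * (SK F * β * SK F) * L5 F) * N5 F * (L5 F)ᵀ * SK F =
      (SK F * (L5 F * N5 F * (L5 F)ᵀ) * SK F) * β * (SK F * (L5 F * N5 F * (L5 F)ᵀ) * SK F) := by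
      simp only [Matrix.mul_assoc]
    rw [this, P5_eq, SK_P5]
  rw [this, h]; simp

end Abstract
end Aux17

namespace Aux17
open scoped Kronecker

section Abstract2
variable {F : Type} [Field F]
variable {X H : Type} [Fintype X] [DecidableEq X] [Fintype H] [DecidableEq H]
variable {E : Matrix X X F} {B : Matrix X (Fin 7 × H) F}

theorem main_abstract [CharP F 2] (hg : Good E B) (T : Subalgebra F (Matrix X X F))
    (g h : H) (hgh : g ≠ h) (p : X) (w : X → F) (hw : E *ᵥ w = w) (hB : Bᵀ *ᵥ w = 0)
    (hp : w p = 1)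
    (hT : ∀ t ∈ T, ∃ c α β, t = form E B c α β)
    (hone : (1 : Matrix X X F) = form E B 1 (SJ F) (D3 F))
    (hET : E ∈ T)
    (h4 : ∀ M : Matrix (Fin 4) (Fin 4) F, form E B 0 (L4 F * M * (L4 F)ᵀ) 0 ∈ T)
    (h5 : ∀ M : Matrix (Fin 5) (Fin 5) F, form E B 0 0 (L5 F * M * (L5 F)ᵀ) ∈ T) :
    ∃ φ : T →ₐ[F] (Matrix (Fin 5) (Fin 5) F × Matrix (Fin 4) (Fin 4) F × F),
      Function.Surjective φ ∧
      ∃ m : ℕ, 1 ≤ m ∧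
        ∀ f : Fin m → T, (∀ j, φ (f j) = 0) → (List.ofFn f).prod = 0 := by
  let f0 : T → Matrix (Fin 5) (Fin 5) F × Matrix (Fin 4) (Fin 4) F × F := fun t =>
    (phi5 B g h t.1, phi4 B g t.1, phi1 p w t.1)
  have hf : ∀ (t : T) c α β, t.1 = form E B c α β → f0 t =
      (N5 F * (L5 F)ᵀ * (c • (SK F * piM F) + SK F * β * SK F) * L5 F,
        (L4 F)ᵀ * (SJ F * α * SJ F) * L4 F, c) := by
    intro t c α β ht
    simp only [f0, ht, phi5_form hg hgh, phi4_form hg, phi1_form p w hw hB hp]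
  have hadd : ∀ s t, f0 (s + t) = f0 s + f0 t := by
    intro s t
    obtain ⟨c, α, β, hs⟩ := hT s.1 s.2
    obtain ⟨c', α', β', ht⟩ := hT t.1 t.2
    rw [hf s _ _ _ hs, hf t _ _ _ ht, hf (s + t) (c + c') (α + α') (β + β')
      (by rw [← form_add, ← hs, ← ht]; rfl)]
    simp only [Prod.mk_add_mk, Matrix.mul_add, Matrix.add_mul, add_smul]
    congr 1; abel
  have hmul : ∀ s t, f0 (s * t) = f0 s * f0 t := by
    intro s t
    obtain ⟨c, α, β, hs⟩ := hT s.1 s.2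
    obtain ⟨c', α', β', ht⟩ := hT t.1 t.2
    have hst : (s * t).1 = s.1 * t.1 := rfl
    simp only [f0, hst, hs, ht, phi5_mul hg hgh, phi4_mul hg, Prod.mk_mul_mk]
    rw [form_mul hg, phi1_form p w hw hB hp, phi1_form p w hw hB hp, phi1_form p w hw hB hp]
  have hsmul : ∀ (r : F) s, f0 (r • s) = r • f0 s := by
    intro r s
    obtain ⟨c, α, β, hs⟩ := hT s.1 s.2
    rw [hf s _ _ _ hs, hf (r • s) (r * c) (r • α) (r • β) (by rw [← form_smul, ← hs]; rfl)]
    simp only [Prod.smul_mk, Matrix.mul_smul, Matrix.smul_mul, smul_add, smul_smul, smul_eq_mul,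
      Matrix.mul_add, Matrix.add_mul]
  have h1 : f0 1 = 1 := by
    rw [hf 1 1 (SJ F) (D3 F) hone, one_smul, add_comm (SK F * piM F), SK_D3, SJ_SJ, SJ_SJ, N5_L5,
      L4_SJ_L4]
    rfl
  let φ : T →ₐ[F] (Matrix (Fin 5) (Fin 5) F × Matrix (Fin 4) (Fin 4) F × F) :=
    AlgHom.ofLinearMap { toFun := f0, map_add' := hadd, map_smul' := hsmul } h1 hmul
  have hφ : ∀ t, φ t = f0 t := fun t => rfl
  refine ⟨φ, ?_, 3, by norm_num, ?_⟩
  · rintro ⟨M5, M4, c⟩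
    let Y := N5 F * (L5 F)ᵀ * (SK F * piM F) * L5 F
    have hmem : form E B c (L4 F * M4 * (L4 F)ᵀ) (L5 F * ((M5 - c • Y) * N5 F) * (L5 F)ᵀ) ∈ T := by
      have := T.add_mem (T.add_mem (T.smul_mem hET c) (h4 M4)) (h5 ((M5 - c • Y) * N5 F))
      have e : E = form E B 1 0 0 := by simp [form]
      have e2 : c • E = form E B c 0 0 := by simp [form]
      rw [e2, form_add, form_add] at this
      simpa using this
    refine ⟨⟨_, hmem⟩, ?_⟩
    rw [hφ, hf _ _ _ _ rfl]
    have hN' : N5 F * ((L5 F)ᵀ * SK F * L5 F) = 1 := by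
      simpa only [Matrix.mul_assoc] using N5_L5 (F := F)
    refine Prod.ext ?_ (Prod.ext ?_ rfl)
    · have a1 : N5 F * (L5 F)ᵀ * (SK F * (L5 F * ((M5 - c • Y) * N5 F) * (L5 F)ᵀ) * SK F) * L5 F =
        (N5 F * ((L5 F)ᵀ * SK F * L5 F)) * (M5 - c • Y) * (N5 F * ((L5 F)ᵀ * SK F * L5 F)) := by
        simp only [Matrix.mul_assoc]
      rw [Matrix.mul_add, Matrix.add_mul, a1, hN', Matrix.mul_smul, Matrix.smul_mul]
      simp only [Matrix.one_mul, Matrix.mul_one]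
      change c • Y + (M5 - c • Y) = M5
      abel
    · have a1 : (L4 F)ᵀ * (SJ F * (L4 F * M4 * (L4 F)ᵀ) * SJ F) * L4 F =
        ((L4 F)ᵀ * SJ F * L4 F) * M4 * ((L4 F)ᵀ * SJ F * L4 F) := by
        simp only [Matrix.mul_assoc]
      change (L4 F)ᵀ * (SJ F * (L4 F * M4 * (L4 F)ᵀ) * SJ F) * L4 F = M4
      rw [a1, L4_SJ_L4]; simp
  · intro f hfz
    have key : ∀ j, ∃ α β, (f j).1 = form E B 0 α β ∧ SJ F * α * SJ F = 0 ∧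
        SK F * β * SK F = 0 := by
      intro j
      obtain ⟨c, α, β, hs⟩ := hT (f j).1 (f j).2
      have := hfz j
      rw [hφ, hf _ _ _ _ hs, Prod.mk_eq_zero, Prod.mk_eq_zero] at this
      obtain ⟨e5, e4, e1⟩ := this
      subst e1
      refine ⟨α, β, hs, zero4 e4, zero5 ?_⟩
      simpa using e5
    obtain ⟨α₁, β₁, e1, -, -⟩ := key 0
    obtain ⟨α₂, β₂, e2, ha, hb⟩ := key 1
    obtain ⟨α₃, β₃, e3, -, -⟩ := key 2
    have : (List.ofFn f).prod = f 0 * (f 1 * f 2) := by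
      simp [List.ofFn_succ]
    rw [this]
    apply Subtype.ext
    change (f 0).1 * ((f 1).1 * (f 2).1) = 0
    rw [e1, e2, e3]
    exact nil_aux hg ha hb

/-- entries of rank one forms -/
lemma formJ_apply (p q : Fin 7 → F) (y z : X) :
    form E B 0 (Matrix.vecMulVec p q) 0 y z =
      (∑ k, p k * ∑ g, B y (k, g)) * (∑ l, q l * ∑ g, B z (l, g)) := by
  simp only [form, zero_smul, Matrix.zero_kronecker, add_zero, zero_add, Matrix.mul_apply,
    Matrix.kroneckerMap_apply, JJ, Matrix.of_apply, Matrix.vecMulVec_apply, Matrix.transpose_apply,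
    Fintype.sum_prod_type, mul_one, Finset.mul_sum, Finset.sum_mul]
  refine Finset.sum_congr rfl fun l _ => Finset.sum_congr rfl fun h _ =>
    Finset.sum_congr rfl fun k _ => Finset.sum_congr rfl fun g _ => ?_
  ring

lemma formI_apply (p q : Fin 7 → F) (y z : X) :
    form E B 0 (Matrix.vecMulVec p q) (Matrix.vecMulVec p q) y z =
      ∑ g, (∑ k, p k * B y (k, g)) * (∑ l, q l * B z (l, g)) := by
  have : Matrix.vecMulVec p q ⊗ₖ JJ F H + Matrix.vecMulVec p q ⊗ₖ KK F H =
      Matrix.vecMulVec p q ⊗ₖ (1 : Matrix H H F) := by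
    rw [← Matrix.kronecker_add, KK]; simp
  rw [form, this]
  simp only [zero_smul, zero_add, Matrix.mul_apply,
    Matrix.kroneckerMap_apply, Matrix.vecMulVec_apply, Matrix.transpose_apply,
    Fintype.sum_prod_type, Matrix.one_apply, mul_ite, mul_one, mul_zero, Finset.sum_ite_eq',
    Finset.sum_ite_eq, Finset.mem_univ, if_true, Finset.sum_mul, Finset.mul_sum, Finset.sum_mul]
  rw [Finset.sum_comm]
  refine Finset.sum_congr rfl fun g _ => Finset.sum_congr rfl fun l _ =>
    Finset.sum_congr rfl fun k _ => ?_
  ring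

lemma single_vec (k l : Fin 7) : Matrix.single k l (1 : F) =
    Matrix.vecMulVec (Pi.single k 1) (Pi.single l 1) := by
  ext i j
  simp only [Matrix.single_apply, Matrix.vecMulVec_apply, Pi.single_apply]
  split_ifs <;> simp_all

lemma U_apply (k l : Fin 7) (y z : X) :
    form E B 0 (Matrix.single k l 1) 0 y z = (∑ g, B y (k, g)) * (∑ g, B z (l, g)) := by
  rw [single_vec, formJ_apply]; simp [Pi.single_apply]

lemma V_apply (k l : Fin 7) (y z : X) :
    form E B 0 (Matrix.single k l 1) (Matrix.single k l 1) y z = ∑ g, B y (k, g) * B z (l, g) := by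
  rw [single_vec, formI_apply]; simp [Pi.single_apply]

lemma V_mul (hg : Good E B) (k l : Fin 7) (m : Fin 7) (h1 : SJ F m m = 1) (h2 : SK F m m = 1) :
    form E B 0 (Matrix.single k m 1) (Matrix.single k m 1) *
    form E B 0 (Matrix.single m l 1) (Matrix.single m l 1) =
    form E B 0 (Matrix.single k l 1) (Matrix.single k l 1) := by
  rw [form_mul hg]
  have : ∀ S : Matrix (Fin 7) (Fin 7) F, S m m = 1 →
      Matrix.single k m (1:F) * S * Matrix.single m l 1 = Matrix.single k l 1 := by
    intro S hS
    simp [Matrix.single_mul_mul_single, hS]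
  rw [this _ h1, this _ h2]; simp

end Abstract2
end Aux17

namespace Aux17
open scoped Kronecker

section Concrete
variable {F : Type} [Field F]
variable {G : Type} [Group G] [Fintype G] [DecidableEq G]

abbrev HH (G : Type) [Group G] : Type := {g : G // g ≠ 1}

def bb (F : Type) [Field F] {G : Type} [Group G] [DecidableEq G] (k : Fin 7) (u v g : G) : F :=
  ![if u = 1 ∧ v = 1 then 1 else 0,
    if u = 1 ∧ v = g then 1 else 0,
    if v = 1 ∧ u = g then 1 else 0,
    if u = v ∧ u = g then 1 else 0,
    if (v ≠ 1 ∧ u ≠ v) ∧ u = g then 1 else 0,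
    if (u ≠ 1 ∧ u ≠ v) ∧ v = g then 1 else 0,
    if (u ≠ 1 ∧ v ≠ 1) ∧ u * v = g then 1 else 0] k

def BM (F : Type) [Field F] {G : Type} [Group G] [DecidableEq G] (x : XG G) :
    Matrix (XG G) (Fin 7 × HH G) F :=
  Matrix.of fun y kg => bb F kg.1 (x.1 0 * y.1 0) (x.1 1 * y.1 1) kg.2.1

def coordEquiv (helem : ∀ a : G, a ^ 2 = 1) (x : XG G) : XG G ≃ G × G where
  toFun y := (x.1 0 * y.1 0, x.1 1 * y.1 1)
  invFun p := ⟨![x.1 0 * p.1, x.1 1 * p.2, (x.1 0 * p.1) * (x.1 1 * p.2)], by simp⟩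
  left_inv y := by
    have h : ∀ a b : G, a * (a * b) = b := fun a b => by rw [← mul_assoc, ← pow_two, helem, one_mul]
    apply Subtype.ext
    funext i
    fin_cases i
    · simp [h]
    · simp [h]
    · simp [h, y.2]
  right_inv p := by
    have h : ∀ a b : G, a * (a * b) = b := fun a b => by rw [← mul_assoc, ← pow_two, helem, one_mul]
    simp [h]

lemma hinv (helem : ∀ a : G, a ^ 2 = 1) (a : G) : a * a = 1 := by rw [← pow_two, helem]
lemma hcomm (helem : ∀ a : G, a ^ 2 = 1) (a b : G) : a * b = b * a := by
  have h : ∀ a : G, a⁻¹ = a := fun a => inv_eq_of_mul_eq_one_right (hinv helem a)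
  have := h (a * b)
  rw [_root_.mul_inv_rev, h, h] at this
  exact this.symm
lemma heq1 (helem : ∀ a : G, a ^ 2 = 1) (a b : G) : a * b = 1 ↔ a = b := by
  constructor
  · intro h
    have := congrArg (· * b) h
    simpa [mul_assoc, hinv helem] using this
  · rintro rfl; exact hinv helem _

/-- relation on coordinates -/
lemma rel_coord (helem : ∀ a : G, a ^ 2 = 1) (x y z : XG G) (u v u' v' : G)
    (hu : x.1 0 * y.1 0 = u) (hv : x.1 1 * y.1 1 = v)
    (hu' : x.1 0 * z.1 0 = u') (hv' : x.1 1 * z.1 1 = v') :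
    (y = z ↔ u = u' ∧ v = v') ∧
    (rel 0 y z ↔ u = u' ∧ v = v') ∧ (rel 1 y z ↔ u = u' ∧ v ≠ v') ∧
    (rel 2 y z ↔ v = v' ∧ u ≠ u') ∧ (rel 3 y z ↔ u * v = u' * v' ∧ u ≠ u') ∧
    (rel 4 y z ↔ u ≠ u' ∧ v ≠ v' ∧ u * v ≠ u' * v') := by
  have h0 : y.1 0 = z.1 0 ↔ u = u' := by rw [← hu, ← hu', mul_right_inj]
  have h1 : y.1 1 = z.1 1 ↔ v = v' := by rw [← hv, ← hv', mul_right_inj]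
  have key : ∀ w : XG G, (x.1 0 * w.1 0) * (x.1 1 * w.1 1) = x.1 0 * x.1 1 * w.1 2 := by
    intro w
    rw [← w.2, mul_assoc, ← mul_assoc (w.1 0), hcomm helem (w.1 0) (x.1 1)]
    simp only [mul_assoc]
  have h2 : y.1 2 = z.1 2 ↔ u * v = u' * v' := by
    rw [← hu, ← hv, ← hu', ← hv', key, key, mul_right_inj]
  have he : y = z ↔ u = u' ∧ v = v' := by
    rw [← h0, ← h1]
    constructor
    · rintro rfl; exact ⟨rfl, rfl⟩
    · rintro ⟨a, b⟩
      apply Subtype.ext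
      funext i
      fin_cases i
      · exact a
      · exact b
      · change y.1 2 = z.1 2
        rw [← y.2, ← z.2, a, b]
  refine ⟨he, ?_, ?_, ?_, ?_, ?_⟩
  · simp [rel, he]
  · simp [rel, cIdx, he, h0]; tauto
  · simp [rel, cIdx, he, h1]; tauto
  · have : u * v = u' * v' → u = u' → v = v' := by
      intro a b; subst b; exact mul_left_cancel a
    simp [rel, cIdx, he, h2]; tauto
  · simp [rel, Fin.forall_fin_succ, h0, h1, h2]

lemma sumH (P Q : Prop) [Decidable P] [Decidable Q] (a a' : G) :
    ∑ g : HH G, (if P ∧ a = g.1 then (1:F) else 0) * (if Q ∧ a' = g.1 then 1 else 0) =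
      if P ∧ Q ∧ a = a' ∧ a ≠ 1 then 1 else 0 := by
  split_ifs with h
  · obtain ⟨hP, hQ, rfl, ha⟩ := h
    rw [Finset.sum_eq_single ⟨a, ha⟩]
    · simp [hP, hQ]
    · rintro ⟨b, hb⟩ - hne
      have : a ≠ b := fun e => hne (by simp [e])
      simp [this]
    · simp
  · apply Finset.sum_eq_zero
    rintro ⟨b, hb⟩ -
    split_ifs with h1 h2
    · exact absurd ⟨h1.1, h2.1, by rw [h1.2, h2.2], by rw [h1.2]; exact hb⟩ h
    all_goals simp

lemma sumH1 (P : Prop) [Decidable P] (a : G) :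
    ∑ g : HH G, (if P ∧ a = g.1 then (1:F) else 0) = if P ∧ a ≠ 1 then 1 else 0 := by
  have := sumH (F := F) P True a a
  have h2 : ∑ g : HH G, (if P ∧ a = g.1 then (1:F) else 0) =
      ∑ g : HH G, (if P ∧ a = g.1 then (1:F) else 0) * (if True ∧ a = g.1 then 1 else 0) := by
    refine Finset.sum_congr rfl fun g _ => ?_
    by_cases h : a = g.1 <;> simp [h]
  rw [h2, this]; simp

/-- the row sums -/
def rr (F : Type) [Field F] {G : Type} [Group G] [DecidableEq G] (k : Fin 7) (u v : G) : F :=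
  ![if u = 1 ∧ v = 1 then 1 else 0,
    if u = 1 ∧ v ≠ 1 then 1 else 0,
    if v = 1 ∧ u ≠ 1 then 1 else 0,
    if u = v ∧ u ≠ 1 then 1 else 0,
    if u ≠ 1 ∧ v ≠ 1 ∧ u ≠ v then 1 else 0,
    if u ≠ 1 ∧ v ≠ 1 ∧ u ≠ v then 1 else 0,
    if u ≠ 1 ∧ v ≠ 1 ∧ u ≠ v then 1 else 0] k

lemma sum_bb (helem : ∀ a : G, a ^ 2 = 1) (hc : (Fintype.card (HH G) : F) = 1)
    (k : Fin 7) (u v : G) : ∑ g : HH G, bb F k u v g.1 = rr F k u v := by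
  have h := heq1 helem u v
  fin_cases k
  · simp only [bb, rr]
    simp only [Fin.zero_eta, Matrix.cons_val_zero, Finset.sum_const, Finset.card_univ, nsmul_eq_mul, hc, one_mul]
  · exact sumH1 _ _
  · exact sumH1 _ _
  · exact sumH1 _ _
  · refine (sumH1 _ _).trans ?_
    simp only [rr]; congr 1; grind
  · refine (sumH1 _ _).trans ?_
    simp only [rr]; congr 1; grind
  · refine (sumH1 _ _).trans ?_
    simp only [rr]; congr 1; grind

lemma sum_count (hn : (Fintype.card G : F) = 0) (h2 : (2:F) = 0) (a : G) (ha : a ≠ 1) :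
    ∑ v : G, (if v ≠ 1 ∧ v ≠ a then (1:F) else 0) = 0 := by
  have : ∀ v : G, (if v ≠ 1 ∧ v ≠ a then (1:F) else 0) =
      1 - (if v = 1 then 1 else 0) - (if v = a then 1 else 0) := by
    intro v
    by_cases h1 : v = 1
    · subst h1; simp [ha.symm]
    · by_cases h3 : v = a <;> simp [h1, h3]
      subst h3; simp [h1]
  simp only [this, Finset.sum_sub_distrib, Finset.sum_ite_eq', Finset.mem_univ, if_true]
  simp only [Finset.sum_const, Finset.card_univ, nsmul_eq_mul, mul_one, hn]
  linear_combination -h2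

/-- a point of one of the blocks 0..3 -/
def pt (k : Fin 7) (g : G) : G × G := ![(1,1),(1,g),(g,1),(g,g),(1,1),(1,1),(1,1)] k

lemma sum_low (k l : Fin 7) (hk : k < 4) (g h : G) :
    ∑ p : G × G, bb F k p.1 p.2 g * bb F l p.1 p.2 h = bb F l (pt k g).1 (pt k g).2 h := by
  have : ∀ p : G × G, bb F k p.1 p.2 g = if p = pt k g then 1 else 0 := by
    rintro ⟨u, v⟩
    have : k = 0 ∨ k = 1 ∨ k = 2 ∨ k = 3 := by grind
    rcases this with rfl | rfl | rfl | rfl <;> simp [bb, pt] <;> grind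
  simp [this]

set_option maxHeartbeats 4000000 in
lemma gram_entry (helem : ∀ a : G, a ^ 2 = 1) (hn : (Fintype.card G : F) = 0) (h2 : (2:F) = 0)
    (k l : Fin 7) (g h : G) (hg : g ≠ 1) (hh : h ≠ 1) :
    ∑ p : G × G, bb F k p.1 p.2 g * bb F l p.1 p.2 h =
      SJ F k l + SK F k l * ((if g = h then 1 else 0) - 1) := by
  have hneg : (-1 : F) = 1 := by linear_combination -h2
  have hsk : ∀ k l, SK F k l = SK F l k := by
    intro k l; fin_cases k <;> fin_cases l <;> rfl
  have hsj : ∀ k l, SJ F k l = SJ F l k := by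
    intro k l; fin_cases k <;> fin_cases l <;> rfl
  have low : ∀ k l : Fin 7, k < 4 → ∀ g h : G, g ≠ 1 → h ≠ 1 →
      ∑ p : G × G, bb F k p.1 p.2 g * bb F l p.1 p.2 h =
      SJ F k l + SK F k l * ((if g = h then 1 else 0) - 1) := by
    intro k l hk g h hg hh
    rw [sum_low k l hk]
    have : k = 0 ∨ k = 1 ∨ k = 2 ∨ k = 3 := by grind
    rcases this with rfl | rfl | rfl | rfl <;> fin_cases l <;>
      simp [bb, pt, SJ, SK, hg, hh, hg.symm, hh.symm, hinv helem]
  by_cases hk : k < 4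
  · exact low k l hk g h hg hh
  by_cases hl : l < 4
  · rw [hsk, hsj]
    simp only [eq_comm (a := g)]
    rw [← low l k hl h g hh hg]
    exact Finset.sum_congr rfl fun p _ => mul_comm _ _
  have off : ∀ (k l : Fin 7) (g h : G) (q : G × G) (C : Prop) [Decidable C],
      (C ↔ g ≠ h) →
      (∀ u v, bb F k u v g * bb F l u v h = if (u,v) = q ∧ C then 1 else 0) →
      ∑ p : G × G, bb F k p.1 p.2 g * bb F l p.1 p.2 h = 0 + 1 * ((if g = h then 1 else 0) - 1) := by
    intro k l g h q C _ hC hb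
    have : ∀ p : G × G, bb F k p.1 p.2 g * bb F l p.1 p.2 h =
        if p = q then (if C then 1 else 0) else 0 := by
      rintro ⟨u, v⟩; rw [hb, ite_and]
    simp only [this, Finset.sum_ite_eq', Finset.mem_univ, if_true, hC]
    split_ifs <;> simp_all
  have dia : ∀ (k : Fin 7), k = 4 ∨ k = 5 ∨ k = 6 →
      ∑ p : G × G, bb F k p.1 p.2 g * bb F k p.1 p.2 h = 0 + 0 * ((if g = h then 1 else 0) - 1) := by
    intro k hk
    rw [zero_mul, zero_add]
    by_cases hgh : g = h
    · subst hgh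
      rw [Fintype.sum_prod_type, ]
      rcases hk with rfl | rfl | rfl
      · rw [Finset.sum_eq_single g]
        · rw [← sum_count hn h2 g hg]
          refine Finset.sum_congr rfl fun v _ => ?_
          simp only [bb]
          simp [eq_comm (a := g)]
        · intro b _ hb; simp [bb, hb]
        · simp
      · rw [Finset.sum_comm, Finset.sum_eq_single g]
        · rw [← sum_count hn h2 g hg]
          refine Finset.sum_congr rfl fun v _ => ?_
          simp [bb]
        · intro b _ hb; simp [bb, hb]
        · simp
      · rw [← sum_count hn h2 g hg]
        refine Finset.sum_congr rfl fun u _ => ?_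
        rw [Finset.sum_eq_single (u * g)]
        · have h3 : u * (u * g) = g := by rw [← mul_assoc, hinv helem, one_mul]
          have h4 := heq1 helem u g
          simp [bb, h3, h4]
        · intro b _ hb
          have : u * b ≠ g := by
            rintro rfl; apply hb; rw [← mul_assoc, hinv helem, one_mul]
          simp [bb, this]
        · simp
    · apply Finset.sum_eq_zero
      rintro ⟨u, v⟩ -
      rcases hk with rfl | rfl | rfl <;> simp [bb] <;> grind
  have c1 := hinv helem
  have c2 := hcomm helem
  have c3 := heq1 helem
  have hk' : k = 4 ∨ k = 5 ∨ k = 6 := by grind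
  have hl' : l = 4 ∨ l = 5 ∨ l = 6 := by grind
  have cl : ∀ u v w : G, u * v = w ↔ v = u * w := by
    intro u v w
    constructor
    · rintro rfl; rw [← mul_assoc, c1, one_mul]
    · rintro rfl; rw [← mul_assoc, c1, one_mul]
  have cl2 : ∀ u w : G, u * (u * w) = w := by
    intro u w; rw [← mul_assoc, c1, one_mul]
  have hm : ∀ P Q : Prop, ∀ [Decidable P] [Decidable Q],
      (if P then (1:F) else 0) * (if Q then 1 else 0) = if P ∧ Q then 1 else 0 := by
    intro P Q _ _; split_ifs <;> simp_all
  rcases hk' with rfl | rfl | rfl <;> rcases hl' with rfl | rfl | rfl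
  · exact dia 4 (by simp)
  · refine off 4 5 g h (g, h) (g ≠ h) Iff.rfl ?_
    intro u v; simp only [bb, Matrix.cons_val]; rw [hm]; congr 1; grind
  · refine off 4 6 g h (g, g * h) (g ≠ h) Iff.rfl ?_
    intro u v; simp only [bb, Matrix.cons_val]; rw [hm]; congr 1
    have := c3 g h; have := cl u v h; have := mul_eq_left (a := g) (b := h); grind
  · refine off 5 4 g h (h, g) (g ≠ h) Iff.rfl ?_
    intro u v; simp only [bb, Matrix.cons_val]; rw [hm]; congr 1; grind
  · exact dia 5 (by simp)
  · refine off 5 6 g h (g * h, g) (g ≠ h) Iff.rfl ?_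
    intro u v; simp only [bb, Matrix.cons_val]; rw [hm]; congr 1
    have := c3 g h; have := cl v u h; have := c2 u v; have := mul_eq_left (a := g) (b := h); grind
  · refine off 6 4 g h (h, g * h) (g ≠ h) Iff.rfl ?_
    intro u v; simp only [bb, Matrix.cons_val]; rw [hm]; congr 1
    have := c3 h g; have := cl u v g; have := c2 g h; have := mul_eq_left (a := h) (b := g); grind
  · refine off 6 5 g h (g * h, h) (g ≠ h) Iff.rfl ?_
    intro u v; simp only [bb, Matrix.cons_val]; rw [hm]; congr 1
    have := c3 h g; have := cl v u g; have := c2 u v; have := c2 g h; have := mul_eq_left (a := h) (b := g); grind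
  · exact dia 6 (by simp)

end Concrete
end Aux17

namespace Aux17
open scoped Kronecker

section Concrete2
variable {F : Type} [Field F]
variable {G : Type} [Group G] [Fintype G] [DecidableEq G]

lemma ite_mul_ite (P Q : Prop) [Decidable P] [Decidable Q] :
    (if P then (1:F) else 0) * (if Q then 1 else 0) = if P ∧ Q then 1 else 0 := by
  split_ifs <;> simp_all

lemma relx (helem : ∀ a : G, a ^ 2 = 1) (x y : XG G) (u v : G)
    (hu : x.1 0 * y.1 0 = u) (hv : x.1 1 * y.1 1 = v) :
    (rel 0 x y ↔ u = 1 ∧ v = 1) ∧ (rel 1 x y ↔ u = 1 ∧ v ≠ 1) ∧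
    (rel 2 x y ↔ v = 1 ∧ u ≠ 1) ∧ (rel 3 x y ↔ u = v ∧ u ≠ 1) ∧
    (rel 4 x y ↔ u ≠ 1 ∧ v ≠ 1 ∧ u ≠ v) := by
  obtain ⟨-, h0, h1, h2, h3, h4⟩ := rel_coord helem x x y 1 1 u v (hinv helem _) (hinv helem _) hu hv
  have h5 := heq1 helem u v
  rw [h0, h1, h2, h3, h4, mul_one]
  rw [eq_comm (a := (1:G)) (b := u * v), ne_eq (1:G) (u*v), eq_comm (a := (1:G)) (b := u * v), h5]
  grind

lemma relx_rr (helem : ∀ a : G, a ^ 2 = 1) (x y : XG G) (k : Fin 5) :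
    (if rel k x y then (1:F) else 0) =
      rr F (Fin.castLE (by norm_num) k) (x.1 0 * y.1 0) (x.1 1 * y.1 1) := by
  obtain ⟨h0, h1, h2, h3, h4⟩ := relx helem x y _ _ rfl rfl
  fin_cases k
  · exact if_congr h0 rfl rfl
  · exact if_congr h1 rfl rfl
  · exact if_congr h2 rfl rfl
  · exact if_congr h3 rfl rfl
  · exact if_congr h4 rfl rfl

lemma DualE_diag (x : XG G) (i : Fin 5) :
    DualE F x i = Matrix.diagonal (fun y => if rel i x y then 1 else 0) := by
  ext y z
  simp only [DualE, Matrix.of_apply, Matrix.diagonal_apply]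
  split_ifs <;> simp_all

lemma DualE_apply (x : XG G) (i : Fin 5) (y z : XG G) :
    DualE F x i y z = if y = z ∧ rel i x y then 1 else 0 := rfl

lemma EAE_apply (x : XG G) (a b c : Fin 5) (y z : XG G) :
    (DualE F x a * Adj F b * DualE F x c : Matrix (XG G) (XG G) F) y z =
      if (rel a x y ∧ rel b y z) ∧ rel c x z then 1 else 0 := by
  rw [DualE_diag, DualE_diag, Matrix.mul_diagonal, Matrix.diagonal_mul, Adj, Matrix.of_apply,
    ite_mul_ite, ite_mul_ite]

lemma good (helem : ∀ a : G, a ^ 2 = 1) (hn : (Fintype.card G : F) = 0) (h2 : (2:F) = 0)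
    (hc : (Fintype.card (HH G) : F) = 1) (x : XG G) : Good (DualE F x 4) (BM F x) := by
  have EB : DualE F x 4 * BM F x = BM F x * (piM F ⊗ₖ (1 : Matrix (HH G) (HH G) F)) := by
    rw [DualE_diag, piM, ← Matrix.diagonal_one, Matrix.diagonal_kronecker_diagonal]
    ext y ⟨k, g, hg⟩
    rw [Matrix.diagonal_mul, Matrix.mul_diagonal]
    obtain ⟨-, -, -, -, h4⟩ := relx helem x y _ _ rfl rfl
    have h5 := heq1 helem (x.1 0 * y.1 0) (x.1 1 * y.1 1)
    simp only [h4, BM, Matrix.of_apply]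
    generalize x.1 0 * y.1 0 = u at *
    generalize x.1 1 * y.1 1 = v at *
    fin_cases k <;> simp [bb] <;> grind
  have Et : (DualE F x 4)ᵀ = DualE F x 4 := by rw [DualE_diag, Matrix.diagonal_transpose]
  refine ⟨hc, ?_, EB, ?_, ?_⟩
  · rw [DualE_diag, Matrix.diagonal_mul_diagonal]
    congr 1; funext y; split_ifs <;> simp
  · have := congrArg Matrix.transpose EB
    rw [Matrix.transpose_mul, Matrix.transpose_mul, Et] at this
    rw [this]
    congr 1
    rw [piM, ← Matrix.diagonal_one, Matrix.diagonal_kronecker_diagonal, Matrix.diagonal_transpose]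
  · ext ⟨k, g, hg⟩ ⟨l, h, hh⟩
    have := gram_entry helem hn h2 k l g h hg hh
    rw [← (coordEquiv helem x).sum_comp] at this
    rw [Matrix.mul_apply]
    refine this.trans ?_
    simp [JJ, KK, Matrix.one_apply]

lemma U_entry (helem : ∀ a : G, a ^ 2 = 1) (hc : (Fintype.card (HH G) : F) = 1)
    (x : XG G) (p q : Fin 7 → F) (y z : XG G) :
    form (DualE F x 4) (BM F x) 0 (Matrix.vecMulVec p q) 0 y z =
      (∑ k, p k * rr F k (x.1 0 * y.1 0) (x.1 1 * y.1 1)) *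
      (∑ k, q k * rr F k (x.1 0 * z.1 0) (x.1 1 * z.1 1)) := by
  rw [formJ_apply]
  simp only [BM, Matrix.of_apply, sum_bb helem hc]

lemma U_entry' (helem : ∀ a : G, a ^ 2 = 1) (hc : (Fintype.card (HH G) : F) = 1)
    (x : XG G) (k l : Fin 7) (y z : XG G) :
    form (DualE F x 4) (BM F x) 0 (Matrix.single k l 1) 0 y z =
      rr F k (x.1 0 * y.1 0) (x.1 1 * y.1 1) * rr F l (x.1 0 * z.1 0) (x.1 1 * z.1 1) := by
  rw [single_vec, U_entry helem hc]; simp [Pi.single_apply]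

lemma V_entry (x : XG G) (k l : Fin 7) (y z : XG G) :
    form (DualE F x 4) (BM F x) 0 (Matrix.single k l 1) (Matrix.single k l 1) y z =
      ∑ g : HH G, bb F k (x.1 0 * y.1 0) (x.1 1 * y.1 1) g.1 *
        bb F l (x.1 0 * z.1 0) (x.1 1 * z.1 1) g.1 := by
  rw [V_apply]; rfl

def IsForm (x : XG G) (t : Matrix (XG G) (XG G) F) : Prop :=
  ∃ c α β, t = form (DualE F x 4) (BM F x) c α β

lemma IsForm.add {x : XG G} {s t : Matrix (XG G) (XG G) F} (hs : IsForm x s) (ht : IsForm x t) :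
    IsForm x (s + t) := by
  obtain ⟨c, α, β, rfl⟩ := hs
  obtain ⟨c', α', β', rfl⟩ := ht
  exact ⟨_, _, _, form_add _ _ _ _ _ _⟩
lemma IsForm.smul {x : XG G} {s : Matrix (XG G) (XG G) F} (r : F) (hs : IsForm x s) :
    IsForm x (r • s) := by
  obtain ⟨c, α, β, rfl⟩ := hs
  exact ⟨_, _, _, form_smul _ _ _ _⟩
lemma IsForm.sub {x : XG G} {s t : Matrix (XG G) (XG G) F} (hs : IsForm x s) (ht : IsForm x t) :
    IsForm x (s - t) := by
  have := hs.add (ht.smul (-1))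
  simpa [sub_eq_add_neg] using this

/-- the products realising the rank one forms -/
lemma V_eq (helem : ∀ a : G, a ^ 2 = 1) (x : XG G) (k l : Fin 7) (a b c : Fin 5)
    (h : (k, l, a, b, c) ∈ ([(1,1,1,0,1), (2,2,2,0,2), (3,3,3,0,3),
      (1,2,1,3,2), (2,1,2,3,1), (1,3,1,2,3), (3,1,3,2,1),
      (1,5,1,2,4), (5,1,4,2,1), (2,4,2,1,4), (4,2,4,1,2)] : List (Fin 7 × Fin 7 × Fin 5 × Fin 5 × Fin 5))) :
    form (DualE F x 4) (BM F x) 0 (Matrix.single k l 1) (Matrix.single k l 1) =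
      DualE F x a * Adj F b * DualE F x c := by
  ext y z
  rw [EAE_apply, V_entry]
  obtain ⟨a0, a1, a2, a3, a4⟩ := relx helem x y _ _ rfl rfl
  obtain ⟨b0, b1, b2, b3, b4⟩ := relx helem x z _ _ rfl rfl
  obtain ⟨-, c0, c1, c2, c3, c4⟩ := rel_coord helem x y z _ _ _ _ rfl rfl rfl rfl
  generalize x.1 0 * y.1 0 = u at *
  generalize x.1 1 * y.1 1 = v at *
  generalize x.1 0 * z.1 0 = u' at *
  generalize x.1 1 * z.1 1 = v' at *
  have e1 := one_mul v
  have e2 := one_mul v'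
  have e3 := mul_one u
  have e4 := mul_one u'
  simp only [List.mem_cons, Prod.mk.injEq, List.not_mem_nil, or_false] at h
  rcases h with h | h | h | h | h | h | h | h | h | h | h <;> obtain ⟨rfl, rfl, rfl, rfl, rfl⟩ := h <;>
    refine (sumH _ _ _ _).trans (if_congr ?_ rfl rfl) <;>
    simp only [a1, a2, a3, a4, b1, b2, b3, b4, c0, c1, c2, c3] <;> grind

lemma one_form (helem : ∀ a : G, a ^ 2 = 1) (hc : (Fintype.card (HH G) : F) = 1) (x : XG G) :
    (1 : Matrix (XG G) (XG G) F) = form (DualE F x 4) (BM F x) 1 (SJ F) (D3 F) := by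
  have e : form (DualE F x 4) (BM F x) 1 (SJ F) (D3 F) =
      form (DualE F x 4) (BM F x) 1 0 0 +
      form (DualE F x 4) (BM F x) 0 (Matrix.single 0 0 1) 0 +
      form (DualE F x 4) (BM F x) 0 (Matrix.single 1 1 1) (Matrix.single 1 1 1) +
      form (DualE F x 4) (BM F x) 0 (Matrix.single 2 2 1) (Matrix.single 2 2 1) +
      form (DualE F x 4) (BM F x) 0 (Matrix.single 3 3 1) (Matrix.single 3 3 1) := by
    simp only [form_add]
    congr 1
    · simp
    · rw [SJ]; ext i j; fin_cases i <;> fin_cases j <;> simp [Matrix.single_apply]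
    · rw [D3]; ext i j; fin_cases i <;> fin_cases j <;> simp [Matrix.single_apply]
  have e4 : form (DualE F x 4) (BM F x) 1 0 0 = DualE F x 4 := by simp [form]
  rw [e, e4, V_eq helem x 1 1 1 0 1 (by simp), V_eq helem x 2 2 2 0 2 (by simp),
    V_eq helem x 3 3 3 0 3 (by simp)]
  ext y z
  simp only [Matrix.add_apply, EAE_apply, DualE_apply]
  rw [U_entry' helem hc]
  obtain ⟨a0, a1, a2, a3, a4⟩ := relx helem x y _ _ rfl rfl
  obtain ⟨b0, b1, b2, b3, b4⟩ := relx helem x z _ _ rfl rfl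
  obtain ⟨d, c0, c1, c2, c3, c4⟩ := rel_coord helem x y z _ _ _ _ rfl rfl rfl rfl
  rw [Matrix.one_apply]
  simp only [a1, a2, a3, a4, b1, b2, b3, b4, c0, c1, c2, c3, d]
  generalize x.1 0 * y.1 0 = u at *
  generalize x.1 1 * y.1 1 = v at *
  generalize x.1 0 * z.1 0 = u' at *
  generalize x.1 1 * z.1 1 = v' at *
  simp only [rr, Matrix.cons_val_zero, ite_mul_ite]
  clear a0 a1 a2 a3 a4 b0 b1 b2 b3 b4 c0 c1 c2 c3 c4 d e e4
  by_cases h1 : u = u' ∧ v = v'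
  · obtain ⟨rfl, rfl⟩ := h1
    by_cases hu : u = 1 <;> by_cases hv : v = 1 <;> by_cases huv : u = v <;> simp [hu, hv, huv]
  · have : ¬ ((u = 1 ∧ v = 1) ∧ (u' = 1 ∧ v' = 1)) := by grind
    simp only [h1, this, if_false]; simp

lemma E_form (helem : ∀ a : G, a ^ 2 = 1) (hc : (Fintype.card (HH G) : F) = 1) (x : XG G)
    (a : Fin 5) : IsForm x (DualE F x a) := by
  have hV : ∀ (k : Fin 7) (a : Fin 5), (k, k, a, 0, a) ∈ ([(1,1,1,0,1), (2,2,2,0,2), (3,3,3,0,3),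
      (1,2,1,3,2), (2,1,2,3,1), (1,3,1,2,3), (3,1,3,2,1),
      (1,5,1,2,4), (5,1,4,2,1), (2,4,2,1,4), (4,2,4,1,2)] : List (Fin 7 × Fin 7 × Fin 5 × Fin 5 × Fin 5)) →
      IsForm x (DualE F x a) := by
    intro k a h
    refine ⟨_, _, _, Eq.trans ?_ (V_eq helem x k k a 0 a h).symm⟩
    have : Adj F (0 : Fin 5) = (1 : Matrix (XG G) (XG G) F) := by
      ext y z; simp [Adj, rel, Matrix.one_apply]
    rw [this, mul_one, DualE_diag, Matrix.diagonal_mul_diagonal]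
    congr 1; funext y; split_ifs <;> simp
  fin_cases a
  · refine ⟨0, Matrix.single 0 0 1, 0, ?_⟩
    ext y z
    rw [U_entry' helem hc]
    obtain ⟨a0, -, -, -, -⟩ := relx helem x y _ _ rfl rfl
    obtain ⟨d, -⟩ := rel_coord helem x y z _ _ _ _ rfl rfl rfl rfl
    simp only [DualE, Matrix.of_apply]
    simp only [Fin.zero_eta, a0, d, rr, Matrix.cons_val_zero, ite_mul_ite]
    congr 1; grind
  · exact hV 1 1 (by simp)
  · exact hV 2 2 (by simp)
  · exact hV 3 3 (by simp)
  · exact ⟨1, 0, 0, by simp [form]⟩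

lemma A_form_aux (helem : ∀ a : G, a ^ 2 = 1) (hc : (Fintype.card (HH G) : F) = 1) (x : XG G)
    (i : Fin 5) (p q : Fin 7 → F) (P : G → G → Prop) [∀ u v, Decidable (P u v)] (e : G → G → G)
    (h1 : ∀ u v, ∑ k, p k * rr F k u v = if P u v then 1 else 0)
    (h2 : ∀ u v g, g ≠ 1 → ∑ k, q k * bb F k u v g = if True ∧ e u v = g then 1 else 0)
    (h3 : ∀ y z : XG G, ∀ u v u' v', u = x.1 0 * y.1 0 → v = x.1 1 * y.1 1 → u' = x.1 0 * z.1 0 →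
      v' = x.1 1 * z.1 1 → ((rel i y z ∨ y = z) ↔ (P u v ∧ P u' v') ∨ (e u v = e u' v' ∧ e u v ≠ 1)))
    (h4 : ∀ u v, P u v → e u v = 1) (h5 : ∀ y : XG G, ¬ rel i y y) :
    IsForm x (Adj F i) := by
  have : Adj F i = form (DualE F x 4) (BM F x) 0 (Matrix.vecMulVec p p) 0 +
      form (DualE F x 4) (BM F x) 0 (Matrix.vecMulVec q q) (Matrix.vecMulVec q q) - 1 := by
    rw [eq_sub_iff_add_eq]
    ext y z
    rw [Matrix.add_apply, Matrix.add_apply, U_entry helem hc, formI_apply, h1, h1]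
    simp only [BM, Matrix.of_apply]
    have : ∀ g : HH G, (∑ k, q k * bb F k (x.1 0 * y.1 0) (x.1 1 * y.1 1) g.1) *
        (∑ l, q l * bb F l (x.1 0 * z.1 0) (x.1 1 * z.1 1) g.1) =
        (if True ∧ e (x.1 0 * y.1 0) (x.1 1 * y.1 1) = g.1 then 1 else 0) *
        (if True ∧ e (x.1 0 * z.1 0) (x.1 1 * z.1 1) = g.1 then 1 else 0) := by
      intro g; rw [h2 _ _ _ g.2, h2 _ _ _ g.2]
    rw [Finset.sum_congr rfl fun g _ => this g, sumH]
    have h3' := h3 y z _ _ _ _ rfl rfl rfl rfl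
    have h4' := h4 (x.1 0 * y.1 0) (x.1 1 * y.1 1)
    have h5' : y = z → ¬ rel i y z := by rintro rfl; exact h5 y
    simp only [Adj, Matrix.of_apply, Matrix.one_apply, ite_mul_ite]
    clear this h1 h2 h3 h4 h5
    split_ifs <;> simp <;> grind
  rw [this]
  exact (IsForm.add ⟨_, _, _, rfl⟩ ⟨_, _, _, rfl⟩).sub ⟨_, _, _, one_form helem hc x⟩

end Concrete2
end Aux17

namespace Aux17
open scoped Kronecker

section Concrete3
variable {F : Type} [Field F]
variable {G : Type} [Group G] [Fintype G] [DecidableEq G]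

lemma A_form (helem : ∀ a : G, a ^ 2 = 1) (hc : (Fintype.card (HH G) : F) = 1) (x : XG G)
    (b : Fin 5) : IsForm x (Adj F b) := by
  have f0 : IsForm x (Adj F 0) := by
    have : Adj F (0 : Fin 5) = (1 : Matrix (XG G) (XG G) F) := by
      ext y z; simp [Adj, rel, Matrix.one_apply]
    rw [this]; exact ⟨_, _, _, one_form helem hc x⟩
  have f1 : IsForm x (Adj F 1) := by
    refine A_form_aux helem hc x 1 ![1,1,0,0,0,0,0] ![0,0,1,1,1,0,0] (fun u v => u = 1)
      (fun u v => u) ?_ ?_ ?_ ?_ ?_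
    · intro u v; simp [Fin.sum_univ_succ, rr]; grind
    · intro u v g hg; simp [Fin.sum_univ_succ, bb]; grind
    · intro y z u v u' v' h1 h2 h3 h4
      obtain ⟨d, c0, c1, c2, c3, c4⟩ := rel_coord helem x y z _ _ _ _ h1.symm h2.symm h3.symm h4.symm
      rw [c1, d]; grind
    · intro u v h; exact h
    · intro y; simp [rel]
  have f2 : IsForm x (Adj F 2) := by
    refine A_form_aux helem hc x 2 ![1,0,1,0,0,0,0] ![0,1,0,1,0,1,0] (fun u v => v = 1)
      (fun u v => v) ?_ ?_ ?_ ?_ ?_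
    · intro u v; simp [Fin.sum_univ_succ, rr]; grind
    · intro u v g hg; simp [Fin.sum_univ_succ, bb]; grind
    · intro y z u v u' v' h1 h2 h3 h4
      obtain ⟨d, c0, c1, c2, c3, c4⟩ := rel_coord helem x y z _ _ _ _ h1.symm h2.symm h3.symm h4.symm
      rw [c2, d]; grind
    · intro u v h; exact h
    · intro y; simp [rel]
  have f3 : IsForm x (Adj F 3) := by
    refine A_form_aux helem hc x 3 ![1,0,0,1,0,0,0] ![0,1,1,0,0,0,1] (fun u v => u = v)
      (fun u v => u * v) ?_ ?_ ?_ ?_ ?_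
    · intro u v; simp [Fin.sum_univ_succ, rr]; grind
    · intro u v g hg
      have e1 := one_mul v
      have e2 := mul_one u
      simp [Fin.sum_univ_succ, bb]; grind
    · intro y z u v u' v' h1 h2 h3 h4
      obtain ⟨d, c0, c1, c2, c3, c4⟩ := rel_coord helem x y z _ _ _ _ h1.symm h2.symm h3.symm h4.symm
      have e1 := heq1 helem u v
      have e2 := heq1 helem u' v'
      have e3 : u = u' → (u * v = u' * v' ↔ v = v') := by rintro rfl; exact mul_right_inj u
      rw [c3, d]; grind
    · intro u v h; exact (heq1 helem u v).2 h
    · intro y; simp [rel]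
  have fJ : IsForm x (Matrix.of fun _ _ => (1:F)) := by
    refine ⟨0, Matrix.vecMulVec ![1,1,1,1,1,0,0] ![1,1,1,1,1,0,0], 0, ?_⟩
    ext y z
    rw [U_entry helem hc]
    have : ∀ u v : G, ∑ k, (![1,1,1,1,1,0,0] : Fin 7 → F) k * rr F k u v = 1 := by
      intro u v; simp [Fin.sum_univ_succ, rr]
      by_cases hu : u = 1 <;> by_cases hv : v = 1 <;> by_cases huv : u = v <;> simp [hu, hv, huv] <;> grind
    rw [this, this]; simp
  have f4 : IsForm x (Adj F 4) := by
    have : Adj F 4 = (Matrix.of fun (_ _ : XG G) => (1:F)) - Adj F 0 - Adj F 1 - Adj F 2 - Adj F 3 := by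
      ext y z
      obtain ⟨d, c0, c1, c2, c3, c4⟩ := rel_coord helem x y z _ _ _ _ rfl rfl rfl rfl
      simp only [Matrix.sub_apply, Adj, Matrix.of_apply, c0, c1, c2, c3, c4]
      generalize x.1 0 * y.1 0 = u at *
      generalize x.1 1 * y.1 1 = v at *
      generalize x.1 0 * z.1 0 = u' at *
      generalize x.1 1 * z.1 1 = v' at *
      have e3 : u = u' → (u * v = u' * v' ↔ v = v') := by rintro rfl; exact mul_right_inj u
      have e4 : v = v' → (u * v = u' * v' ↔ u = u') := by rintro rfl; exact mul_left_inj v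
      by_cases hu : u = u' <;> by_cases hv : v = v' <;> by_cases huv : u * v = u' * v' <;>
        simp [hu, hv, huv] <;> grind
    rw [this]
    exact (((fJ.sub f0).sub f1).sub f2).sub f3
  fin_cases b
  · exact f0
  · exact f1
  · exact f2
  · exact f3
  · exact f4

lemma T_form (helem : ∀ a : G, a ^ 2 = 1) (hn : (Fintype.card G : F) = 0) (h2 : (2:F) = 0)
    (hc : (Fintype.card (HH G) : F) = 1) (x : XG G) (t : Matrix (XG G) (XG G) F)
    (ht : t ∈ TerwilligerAlg F G x) : IsForm x t := by
  have hmul : ∀ s t : Matrix (XG G) (XG G) F, IsForm x s → IsForm x t → IsForm x (s * t) := by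
    rintro _ _ ⟨c, α, β, rfl⟩ ⟨c', α', β', rfl⟩
    exact ⟨_, _, _, form_mul (good helem hn h2 hc x) _ _ _ _ _ _⟩
  unfold TerwilligerAlg at ht
  induction ht using Algebra.adjoin_induction with
  | mem t h =>
    obtain ⟨a, b, c, rfl⟩ := h
    exact hmul _ _ (hmul _ _ (E_form helem hc x a) (A_form helem hc x b)) (E_form helem hc x c)
  | algebraMap r =>
    rw [Algebra.algebraMap_eq_smul_one]
    exact IsForm.smul r ⟨_, _, _, one_form helem hc x⟩
  | add s t _ _ hs ht => exact hs.add ht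
  | mul s t _ _ hs ht => exact hmul _ _ hs ht

lemma gen_mem (x : XG G) (a b c : Fin 5) :
    DualE F x a * Adj F b * DualE F x c ∈ TerwilligerAlg F G x :=
  Algebra.subset_adjoin ⟨a, b, c, rfl⟩

lemma E_mem (x : XG G) (a : Fin 5) : DualE F x a ∈ TerwilligerAlg F G x := by
  have := gen_mem (F := F) x a 0 a
  have h : Adj F (0 : Fin 5) = (1 : Matrix (XG G) (XG G) F) := by
    ext y z; simp [Adj, rel, Matrix.one_apply]
  rw [h, mul_one, DualE_diag, Matrix.diagonal_mul_diagonal] at this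
  rw [DualE_diag]
  convert this using 2
  funext y; split_ifs <;> simp

lemma sum_Adj (helem : ∀ a : G, a ^ 2 = 1) (x : XG G) :
    ∑ b : Fin 5, Adj F b = (Matrix.of fun (_ _ : XG G) => (1:F)) := by
  ext y z
  obtain ⟨d, c0, c1, c2, c3, c4⟩ := rel_coord helem x y z _ _ _ _ rfl rfl rfl rfl
  simp only [Fin.sum_univ_five, Matrix.add_apply, Adj, Matrix.of_apply, c0, c1, c2, c3, c4]
  generalize x.1 0 * y.1 0 = u at *
  generalize x.1 1 * y.1 1 = v at *
  generalize x.1 0 * z.1 0 = u' at *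
  generalize x.1 1 * z.1 1 = v' at *
  have e3 : u = u' → (u * v = u' * v' ↔ v = v') := by rintro rfl; exact mul_right_inj u
  have e4 : v = v' → (u * v = u' * v' ↔ u = u') := by rintro rfl; exact mul_left_inj v
  by_cases hu : u = u' <;> by_cases hv : v = v' <;> by_cases huv : u * v = u' * v' <;>
    simp [hu, hv, huv] <;> grind

lemma U_mem5 (helem : ∀ a : G, a ^ 2 = 1) (hc : (Fintype.card (HH G) : F) = 1) (x : XG G)
    (k l : Fin 5) : form (DualE F x 4) (BM F x) 0
      (Matrix.single (Fin.castLE (by norm_num) k) (Fin.castLE (by norm_num) l) 1) 0 ∈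
      TerwilligerAlg F G x := by
  have : form (DualE F x 4) (BM F x) 0
      (Matrix.single (Fin.castLE (by norm_num) k) (Fin.castLE (by norm_num) l) 1) 0 =
      ∑ b : Fin 5, DualE F x k * Adj F b * DualE F x l := by
    rw [← Finset.sum_mul, ← Finset.mul_sum, sum_Adj helem x]
    ext y z
    rw [U_entry' helem hc, DualE_diag, DualE_diag, Matrix.mul_diagonal, Matrix.diagonal_mul,
      relx_rr helem, relx_rr helem]
    simp
  rw [this]
  exact Subalgebra.sum_mem _ fun b _ => gen_mem x k b l

lemma U_mem (helem : ∀ a : G, a ^ 2 = 1) (hc : (Fintype.card (HH G) : F) = 1) (x : XG G)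
    (k l : Fin 7) : form (DualE F x 4) (BM F x) 0 (Matrix.single k l 1) 0 ∈
      TerwilligerAlg F G x := by
  have key : ∀ k : Fin 7, ∃ k' : Fin 5, ∀ u v : G,
      rr F k u v = rr F (Fin.castLE (by norm_num) k') u v := by
    intro k
    fin_cases k
    · exact ⟨0, fun u v => rfl⟩
    · exact ⟨1, fun u v => rfl⟩
    · exact ⟨2, fun u v => rfl⟩
    · exact ⟨3, fun u v => rfl⟩
    · exact ⟨4, fun u v => rfl⟩
    · exact ⟨4, fun u v => rfl⟩
    · exact ⟨4, fun u v => rfl⟩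
  obtain ⟨k', hk⟩ := key k
  obtain ⟨l', hl⟩ := key l
  have := U_mem5 helem hc x k' l'
  convert this using 1
  ext y z
  rw [U_entry' helem hc, U_entry' helem hc, hk, hl]

lemma V_mem (helem : ∀ a : G, a ^ 2 = 1) (hn : (Fintype.card G : F) = 0) (h2 : (2:F) = 0)
    (hc : (Fintype.card (HH G) : F) = 1) (x : XG G) (i j : Fin 5) :
    form (DualE F x 4) (BM F x) 0 (Matrix.single (Fin.castLE (by norm_num) i.succ)
      (Fin.castLE (by norm_num) j.succ) 1) (Matrix.single (Fin.castLE (by norm_num) i.succ)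
      (Fin.castLE (by norm_num) j.succ) 1) ∈ TerwilligerAlg F G x := by
  have hg := good helem hn h2 hc x
  have hm : ∀ k m l : Fin 7, SJ F m m = 1 → SK F m m = 1 →
      form (DualE F x 4) (BM F x) 0 (Matrix.single k m 1) (Matrix.single k m 1) ∈ TerwilligerAlg F G x →
      form (DualE F x 4) (BM F x) 0 (Matrix.single m l 1) (Matrix.single m l 1) ∈ TerwilligerAlg F G x →
      form (DualE F x 4) (BM F x) 0 (Matrix.single k l 1) (Matrix.single k l 1) ∈ TerwilligerAlg F G x := by
    intro k m l a b h1 h2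
    rw [← V_mul hg k l m a b]
    exact mul_mem h1 h2
  have hs : ∀ k l a b c, _ → form (DualE F x 4) (BM F x) 0 (Matrix.single k l 1) (Matrix.single k l 1)
      ∈ TerwilligerAlg F G x := fun k l a b c h => by
    rw [V_eq helem x k l a b c h]; exact gen_mem x a b c
  have r : ∀ j : Fin 5, form (DualE F x 4) (BM F x) 0 (Matrix.single 1
      (Fin.castLE (by norm_num) j.succ) 1) (Matrix.single 1
      (Fin.castLE (by norm_num) j.succ) 1) ∈ TerwilligerAlg F G x := by
    intro j
    fin_cases j
    · exact hs 1 1 1 0 1 (by simp)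
    · exact hs 1 2 1 3 2 (by simp)
    · exact hs 1 3 1 2 3 (by simp)
    · exact hm 1 2 4 (by simp [SJ]) (by simp [SK]) (hs 1 2 1 3 2 (by simp)) (hs 2 4 2 1 4 (by simp))
    · exact hs 1 5 1 2 4 (by simp)
  have s : ∀ j : Fin 5, form (DualE F x 4) (BM F x) 0 (Matrix.single
      (Fin.castLE (by norm_num) j.succ) 1 1) (Matrix.single
      (Fin.castLE (by norm_num) j.succ) 1 1) ∈ TerwilligerAlg F G x := by
    intro j
    fin_cases j
    · exact hs 1 1 1 0 1 (by simp)
    · exact hs 2 1 2 3 1 (by simp)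
    · exact hs 3 1 3 2 1 (by simp)
    · exact hm 4 2 1 (by simp [SJ]) (by simp [SK]) (hs 4 2 4 1 2 (by simp)) (hs 2 1 2 3 1 (by simp))
    · exact hs 5 1 4 2 1 (by simp)
  exact hm _ 1 _ (by simp [SJ]) (by simp [SK]) (s i) (r j)

lemma L4_apply (k : Fin 7) (i : Fin 4) :
    L4 F k i = if k = Fin.castLE (by norm_num) i then 1 else 0 := by
  fin_cases k <;> fin_cases i <;> simp [L4, Fin.ext_iff]
lemma L5_apply (k : Fin 7) (i : Fin 5) :
    L5 F k i = if k = Fin.castLE (by norm_num) i.succ then 1 else 0 := by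
  fin_cases k <;> fin_cases i <;> simp [L5, Fin.ext_iff]

lemma L_single {m : ℕ} (L : Matrix (Fin 7) (Fin m) F) (e : Fin m → Fin 7)
    (hL : ∀ k i, L k i = if k = e i then 1 else 0) (i j : Fin m) (c : F) :
    L * Matrix.single i j c * Lᵀ = c • Matrix.single (e i) (e j) 1 := by
  ext k l
  rw [Matrix.mul_apply, Finset.sum_eq_single j]
  · rw [Matrix.mul_single_apply_same, Matrix.transpose_apply, hL, hL, Matrix.smul_apply,
      Matrix.single_apply]
    by_cases h1 : k = e i
    · by_cases h2 : l = e j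
      · simp [h1, h2]
      · simp [h1, h2, Ne.symm h2]
    · simp [h1, Ne.symm h1]
  · intro b _ hb
    rw [Matrix.mul_single_apply_of_ne _ _ _ _ _ hb, zero_mul]
  · simp

lemma L4_mem (helem : ∀ a : G, a ^ 2 = 1) (hc : (Fintype.card (HH G) : F) = 1) (x : XG G)
    (M : Matrix (Fin 4) (Fin 4) F) :
    form (DualE F x 4) (BM F x) 0 (L4 F * M * (L4 F)ᵀ) 0 ∈ TerwilligerAlg F G x := by
  induction M using Matrix.induction_on' with
  | h_zero => simp [form]
  | h_add p q hp hq =>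
    have := add_mem hp hq
    rw [form_add] at this
    simpa [Matrix.mul_add, Matrix.add_mul] using this
  | h_std_basis i j c =>
    rw [L_single _ _ L4_apply]
    have := (TerwilligerAlg F G x).smul_mem (U_mem helem hc x (Fin.castLE (by norm_num) i)
      (Fin.castLE (by norm_num) j)) c
    rw [form_smul] at this
    simpa using this

lemma L5_mem (helem : ∀ a : G, a ^ 2 = 1) (hn : (Fintype.card G : F) = 0) (h2 : (2:F) = 0)
    (hc : (Fintype.card (HH G) : F) = 1) (x : XG G)
    (M : Matrix (Fin 5) (Fin 5) F) :
    form (DualE F x 4) (BM F x) 0 0 (L5 F * M * (L5 F)ᵀ) ∈ TerwilligerAlg F G x := by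
  induction M using Matrix.induction_on' with
  | h_zero => simp [form]
  | h_add p q hp hq =>
    have := add_mem hp hq
    rw [form_add] at this
    simpa [Matrix.mul_add, Matrix.add_mul] using this
  | h_std_basis i j c =>
    rw [L_single _ _ L5_apply]
    have h1 := (TerwilligerAlg F G x).smul_mem (V_mem helem hn h2 hc x i j) c
    have h3 := (TerwilligerAlg F G x).smul_mem (U_mem helem hc x (Fin.castLE (by norm_num) i.succ)
      (Fin.castLE (by norm_num) j.succ)) (-c)
    have := add_mem h1 h3
    rw [form_smul, form_smul, form_add] at this
    simpa using this

/-- the vector giving the one dimensional representation -/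
def W6 (F : Type) [Field F] (g h : G) (p : G × G) : F :=
  (if p = (g, h) then 1 else 0) + (if p = (h, g) then 1 else 0) +
  (if p = (g, g * h) then 1 else 0) + (if p = (g * h, g) then 1 else 0) +
  (if p = (h, g * h) then 1 else 0) + (if p = (g * h, h) then 1 else 0)

lemma W6_bb (helem : ∀ a : G, a ^ 2 = 1) (h2 : (2:F) = 0) (g h : G) (hg : g ≠ 1) (hh : h ≠ 1)
    (hgh : g ≠ h) (k : Fin 7) (a : G) (ha : a ≠ 1) :
    ∑ p : G × G, bb F k p.1 p.2 a * W6 F g h p = 0 := by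
  simp only [W6, mul_add, Finset.sum_add_distrib, mul_ite, mul_one, mul_zero, Finset.sum_ite_eq',
    Finset.mem_univ, if_true]
  have e1 : g * h ≠ 1 := fun e => hgh ((heq1 helem g h).1 e)
  have e2 : g * h ≠ g := by simpa using hh
  have e3 : g * h ≠ h := by simpa using hg
  have e4 : g * (g * h) = h := by rw [← mul_assoc, hinv helem, one_mul]
  have e5 : h * (g * h) = g := by rw [hcomm helem g h, ← mul_assoc, hinv helem, one_mul]
  have e6 : g * h * g = h := by rw [hcomm helem, e4]
  have e7 : g * h * h = g := by rw [mul_assoc, hinv helem, mul_one]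
  have e8 : h * g = g * h := hcomm helem h g
  have hd : ∀ t : F, t + t = 0 := fun t => by linear_combination t * h2
  fin_cases k <;>
    simp [bb, hg, hh, hgh, hgh.symm, e1, e2, e3, e2.symm, e3.symm, e4, e5, e6, e7, e8, ha] <;>
    (generalize (if g = a then (1:F) else 0) = A
     generalize (if h = a then (1:F) else 0) = B
     generalize (if g * h = a then (1:F) else 0) = C
     linear_combination (A + B + C) * h2)

end Concrete3
end Aux17

theorem stmt17 (F : Type) [Field F] (G : Type) [Group G] [Fintype G] [DecidableEq G]
    (hp : ringChar F = 2)
    (helem : ∀ a : G, a ^ 2 = 1) (hcard : 3 ≤ Fintype.card G)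
    (x : XG G) :
    ∃ φ : TerwilligerAlg F G x →ₐ[F]
        (Matrix (Fin 5) (Fin 5) F × Matrix (Fin 4) (Fin 4) F × F),
      Function.Surjective φ ∧
      ∃ m : ℕ, 1 ≤ m ∧
        ∀ f : Fin m → TerwilligerAlg F G x,
          (∀ j, φ (f j) = 0) → (List.ofFn f).prod = 0 := by
  haveI : CharP F 2 := by rw [← hp]; exact ringChar.charP F
  have h2 : (2:F) = 0 := by exact_mod_cast CharP.cast_eq_zero F 2
  obtain ⟨g, hg⟩ : ∃ g : G, g ≠ 1 := by
    haveI : Nontrivial G := Fintype.one_lt_card_iff_nontrivial.1 (by omega)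
    exact exists_ne 1
  obtain ⟨h, hh⟩ : ∃ h : G, h ∉ ({1, g} : Finset G) := by
    by_contra! hcon
    have h1 : Fintype.card G ≤ ({1, g} : Finset G).card := by
      rw [← Finset.card_univ]; exact Finset.card_le_card fun a _ => hcon a
    have := Finset.card_le_two (a := (1:G)) (b := g)
    omega
  simp only [Finset.mem_insert, Finset.mem_singleton, not_or] at hh
  obtain ⟨hh1, hhg⟩ := hh
  have hdvd : 2 ∣ Fintype.card G := by
    have := orderOf_dvd_card (x := g)
    rwa [orderOf_eq_prime (helem g) hg] at this
  have hn : (Fintype.card G : F) = 0 := (CharP.cast_eq_zero_iff F 2 _).2 hdvd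
  have hc : (Fintype.card (Aux17.HH G) : F) = 1 := by
    have e : Fintype.card (Aux17.HH G) + 1 = Fintype.card G := by
      have := Fintype.card_subtype_compl (fun a : G => a = 1)
      simp only [Fintype.card_subtype_eq] at this
      change Fintype.card {a : G // ¬ a = 1} + 1 = _
      omega
    have e2 : (Fintype.card (Aux17.HH G) : F) + 1 = 0 := by rw [← hn, ← e]; push_cast; rfl
    linear_combination e2 - h2
  let e := Aux17.coordEquiv helem x
  have e1 : g * h ≠ 1 := fun e => hhg ((Aux17.heq1 helem g h).1 e).symm
  have e2 : g * h ≠ g := by simpa using hh1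
  have e3 : g * h ≠ h := by simpa using hg
  refine Aux17.main_abstract (Aux17.good helem hn h2 hc x) (TerwilligerAlg F G x)
    ⟨g, hg⟩ ⟨h, hh1⟩ (by simpa using Ne.symm hhg) (e.symm (g, h)) (fun y => Aux17.W6 F g h (e y))
    ?_ ?_ ?_ ?_ (Aux17.one_form helem hc x) (Aux17.E_mem x 4) (Aux17.L4_mem helem hc x)
    (Aux17.L5_mem helem hn h2 hc x)
  · funext y
    rw [Aux17.DualE_diag, Matrix.mulVec_diagonal]
    obtain ⟨-, -, -, -, h4⟩ := Aux17.relx helem x y (e y).1 (e y).2 rfl rfl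
    simp only [h4]
    generalize e y = p
    obtain ⟨u, v⟩ := p
    by_cases hb : u ≠ 1 ∧ v ≠ 1 ∧ u ≠ v
    · simp [hb]
    · simp only [hb, if_false, zero_mul]
      simp only [Aux17.W6, Prod.mk.injEq]
      grind
  · funext ⟨k, a, ha⟩
    have := Aux17.W6_bb helem h2 g h hg hh1 (Ne.symm hhg) k a ha
    rw [← e.sum_comp] at this
    exact this
  · simp only [Equiv.apply_symm_apply, Aux17.W6, Prod.mk.injEq]
    simp [hhg, Ne.symm hhg, e2.symm, e3.symm]
  · exact Aux17.T_form helem hn h2 hc x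
end

section
/- Assume G is an elementary abelian 2-group with |G| = n, the characteristic of F is neither 2 nor 3, and the image of n in F equals 4 (i.e. n ≡ 4 mod p where p = char F). Then there is a surjective F-algebra homomorphism from the Terwilliger F-algebra T onto M₅(F) × M₅(F) × F whose kernel K is a nilpotent two-sided ideal of T (there exists m ≥ 1 such that any product of m elements of K equals the zero matrix). Consequently T/Rad T ≅ M₅(F) ⊕ M₅(F) ⊕ M₁(F) as F-algebras, where Rad T = K is the Jacobson radical of T. -/
open Matrix

section Aux

set_option linter.unusedSectionVars false
set_option linter.unusedSimpArgs false

open scoped Kronecker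

variable {F : Type} [Field F] {G : Type} [Group G] [Fintype G] [DecidableEq G]

/-- The projection onto the functions on the nontrivial elements with sum zero. -/
def pr (F : Type) [Field F] {G : Type} [Group G] [DecidableEq G] (u g : G) : F :=
  if u = 1 then 0 else if g = 1 then 0 else (if u = g then 1 else 0) - 1 / 3

theorem pr_one_left (g : G) : pr F 1 g = 0 := by simp [pr]
theorem pr_one_right (g : G) : pr F g 1 = 0 := by simp [pr]
theorem pr_symm (u g : G) : pr F u g = pr F g u := by
  unfold pr
  by_cases h1 : u = 1 <;> by_cases h2 : g = 1 <;> simp [h1, h2, eq_comm]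

theorem pr_eq (u g : G) (hg : g ≠ 1) :
    pr F u g = (if u = g then 1 else 0) - 1 / 3 + (if u = 1 then 1 / 3 else 0) := by
  unfold pr
  by_cases h : u = 1
  · subst h; simp [hg, hg.symm]
  · simp [h, hg]

theorem sum_pr (h3 : (3 : F) ≠ 0) (hn : (Fintype.card G : F) = 4) (g : G) :
    ∑ u : G, pr F u g = 0 := by
  by_cases hg : g = 1
  · subst hg; simp [pr_one_right]
  · simp only [pr_eq _ g hg, Finset.sum_add_distrib, Finset.sum_sub_distrib]
    simp [hn]; field_simp; norm_num

theorem sum_pr_pr (h3 : (3 : F) ≠ 0) (hn : (Fintype.card G : F) = 4) (g h : G) :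
    ∑ u : G, pr F u g * pr F u h = pr F g h := by
  by_cases hg : g = 1
  · subst hg; simp [pr_one_right, pr_one_left]
  · have : ∀ u, pr F u g * pr F u h
        = (if u = g then pr F g h else 0) - 1 / 3 * pr F u h := by
      intro u
      rw [pr_eq u g hg]
      by_cases h1 : u = 1
      · subst h1; simp [pr_one_left, Ne.symm hg]
      · by_cases h2 : u = g <;> simp [h1, h2]
        simp [hg]; ring
    simp only [this, Finset.sum_sub_distrib, ← Finset.mul_sum, sum_pr h3 hn]
    simp

theorem sum_pr_mul (h3 : (3 : F) ≠ 0) (hn : (Fintype.card G : F) = 4) (a g : G) :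
    ∑ u : G, pr F (a * u) g = 0 := by
  rw [← sum_pr h3 hn g]
  exact Equiv.sum_comp (Equiv.mulLeft a) (fun u => pr F u g)

theorem sum_pr_mul' (h3 : (3 : F) ≠ 0) (hn : (Fintype.card G : F) = 4) (a g : G) :
    ∑ u : G, pr F (u * a) g = 0 := by
  rw [← sum_pr h3 hn g]
  exact Equiv.sum_comp (Equiv.mulRight a) (fun u => pr F u g)

theorem sum_pr_pr_mul (h3 : (3 : F) ≠ 0) (hn : (Fintype.card G : F) = 4) (a g h : G) :
    ∑ u : G, pr F (a * u) g * pr F (a * u) h = pr F g h := by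
  rw [← sum_pr_pr h3 hn g h]
  exact Equiv.sum_comp (Equiv.mulLeft a) (fun u => pr F u g * pr F u h)

/-- class of a point with relative coordinates `a, b` -/
def kl (a b : G) : Fin 5 :=
  if a = 1 then (if b = 1 then 0 else 1) else if b = 1 then 2 else if a = b then 3 else 4

def lb (α : Fin 6) (a b : G) : G := ![b, a, a, a, b, a * b] α

def cA : Fin 6 → Fin 5 := ![1, 2, 3, 4, 4, 4]

theorem sum_kl0 (f : G → G → F) :
    ∑ a, ∑ b, (if kl a b = 0 then f a b else 0) = f 1 1 := by
  have : ∀ a b, (if kl a b = 0 then f a b else 0)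
      = if a = 1 then (if b = 1 then f 1 1 else 0) else 0 := by
    intro a b; unfold kl; split_ifs <;> simp_all
  simp [this]

theorem sum_kl1 (f : G → G → F) :
    ∑ a, ∑ b, (if kl a b = 1 then f a b else 0) = ∑ b, f 1 b - f 1 1 := by
  have : ∀ a b, (if kl a b = 1 then f a b else 0)
      = (if a = 1 then f 1 b else 0) - if a = 1 then (if b = 1 then f 1 1 else 0) else 0 := by
    intro a b; unfold kl; split_ifs <;> simp_all
  simp only [this, Finset.sum_sub_distrib]
  rw [Finset.sum_comm]
  simp

theorem sum_kl2 (f : G → G → F) :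
    ∑ a, ∑ b, (if kl a b = 2 then f a b else 0) = ∑ a, f a 1 - f 1 1 := by
  have : ∀ a b, (if kl a b = 2 then f a b else 0)
      = (if b = 1 then f a 1 else 0) - if a = 1 then (if b = 1 then f 1 1 else 0) else 0 := by
    intro a b; unfold kl; split_ifs <;> simp_all
  simp only [this, Finset.sum_sub_distrib]
  simp

theorem sum_kl3 (f : G → G → F) :
    ∑ a, ∑ b, (if kl a b = 3 then f a b else 0) = ∑ a, f a a - f 1 1 := by
  have : ∀ a b, (if kl a b = 3 then f a b else 0)
      = (if a = b then f a a else 0) - if a = 1 then (if b = 1 then f 1 1 else 0) else 0 := by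
    intro a b; unfold kl; split_ifs <;> simp_all
  simp only [this, Finset.sum_sub_distrib]
  simp

theorem sum_kl4 (f : G → G → F) :
    ∑ a, ∑ b, (if kl a b = 4 then f a b else 0)
      = ∑ a, ∑ b, f a b - ∑ b, f 1 b - ∑ a, f a 1 - ∑ a, f a a + 2 * f 1 1 := by
  have : ∀ a b, (if kl a b = 4 then f a b else 0)
      = f a b - (if kl a b = 0 then f a b else 0) - (if kl a b = 1 then f a b else 0)
        - (if kl a b = 2 then f a b else 0) - (if kl a b = 3 then f a b else 0) := by
    intro a b
    generalize kl a b = k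
    fin_cases k <;> simp
  simp only [this, Finset.sum_sub_distrib, sum_kl0, sum_kl1, sum_kl2, sum_kl3]
  ring

/-- Gram matrix of the six families. -/
def gM (F : Type) [Field F] : Matrix (Fin 6) (Fin 6) F :=
  !![1,0,0,0,0,0; 0,1,0,0,0,0; 0,0,1,0,0,0; 0,0,0,2,-1,-1; 0,0,0,-1,2,-1; 0,0,0,-1,-1,2]

theorem gram (h3 : (3 : F) ≠ 0) (hn : (Fintype.card G : F) = 4)
    (hsq : ∀ a : G, a * a = 1) (α β : Fin 6) (g h : G) :
    ∑ a : G, ∑ b : G, (if kl a b = cA α then pr F (lb α a b) g else 0) *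
      (if kl a b = cA β then pr F (lb β a b) h else 0) = gM F α β * pr F g h := by
  have e1 : ∀ a b : G, (if kl a b = cA α then pr F (lb α a b) g else 0) *
      (if kl a b = cA β then pr F (lb β a b) h else 0)
      = if kl a b = cA α then (if cA α = cA β then pr F (lb α a b) g * pr F (lb β a b) h else 0)
        else 0 := by
    intro a b
    by_cases h1 : kl a b = cA α <;> simp [h1]
  simp only [e1]
  have s1 := sum_pr (F := F) (G := G) h3 hn
  have s2 := sum_pr_pr (F := F) (G := G) h3 hn
  have s3 := sum_pr_mul (F := F) (G := G) h3 hn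
  have s4 := sum_pr_mul' (F := F) (G := G) h3 hn
  have s5 := sum_pr_pr_mul (F := F) (G := G) h3 hn
  have s6 : ∑ u : G, ∑ v : G, pr F v g * pr F (u * v) h = 0 := by
    rw [Finset.sum_comm]; simp [← Finset.mul_sum, s4]
  have s7 : ∑ u : G, ∑ v : G, pr F (u * v) g * pr F v h = 0 := by
    rw [Finset.sum_comm]; simp [← Finset.sum_mul, s4]
  have s8 : ∑ u : G, ∑ v : G, pr F (u * v) g * pr F u h = 0 := by
    simp [← Finset.sum_mul, s3]
  have s9 : ∑ u : G, pr F u h * pr F u g = pr F g h := by rw [s2, pr_symm]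
  fin_cases α <;> fin_cases β <;>
    simp [cA, lb, sum_kl1, sum_kl2, sum_kl3, sum_kl4, gM, pr_one_left, s1, s2, s3, s4, s5,
      ← Finset.mul_sum, ← Finset.sum_mul, hn, hsq, s6, s7, s8, s9]
  all_goals try ring

theorem sum_lab (h3 : (3 : F) ≠ 0) (hn : (Fintype.card G : F) = 4)
    (hsq : ∀ a : G, a * a = 1) (α : Fin 6) (g : G) :
    ∑ a : G, ∑ b : G, (if kl a b = cA α then pr F (lb α a b) g else 0) = 0 := by
  have s1 := sum_pr (F := F) (G := G) h3 hn
  have s3 := sum_pr_mul (F := F) (G := G) h3 hn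
  fin_cases α
  · exact (sum_kl1 (fun a b => pr F b g)).trans (by
      simp [pr_one_left, s1, s3, hsq])
  · exact (sum_kl2 (fun a b => pr F a g)).trans (by
      simp [pr_one_left, s1, s3, hsq])
  · exact (sum_kl3 (fun a b => pr F a g)).trans (by
      simp [pr_one_left, s1, s3, hsq])
  · exact (sum_kl4 (fun a b => pr F a g)).trans (by
      simp [← Finset.mul_sum, pr_one_left, s1, s3, hsq])
  · exact (sum_kl4 (fun a b => pr F b g)).trans (by
      simp [pr_one_left, s1, s3, hsq])
  · exact (sum_kl4 (fun a b => pr F (a * b) g)).trans (by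
      simp [← Finset.mul_sum, pr_one_left, s1, s3, hsq])

def dlt : Fin 5 → ℕ := ![1, 3, 3, 3, 6]

theorem sum_cls (hn : (Fintype.card G : F) = 4) (i : Fin 5) :
    ∑ a : G, ∑ b : G, (if kl a b = i then (1 : F) else 0) = dlt i := by
  fin_cases i
  · simpa [dlt] using sum_kl0 (F := F) (G := G) (fun _ _ => 1)
  · simpa [dlt, hn] using (sum_kl1 (F := F) (G := G) (fun _ _ => 1)).trans (by simp [hn]; norm_num)
  · simpa [dlt, hn] using (sum_kl2 (F := F) (G := G) (fun _ _ => 1)).trans (by simp [hn]; norm_num)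
  · simpa [dlt, hn] using (sum_kl3 (F := F) (G := G) (fun _ _ => 1)).trans (by simp [hn]; norm_num)
  · simpa [dlt, hn] using (sum_kl4 (F := F) (G := G) (fun _ _ => 1)).trans (by simp [hn]; norm_num)

/-- relative coordinates -/
def cx (x y : XG G) : G := y.1 0 * (x.1 0)⁻¹
def cy (x y : XG G) : G := y.1 1 * (x.1 1)⁻¹
def ks (x y : XG G) : Fin 5 := kl (cx x y) (cy x y)

def coordEquiv (x : XG G) : G × G ≃ XG G where
  toFun p := ⟨![p.1 * x.1 0, p.2 * x.1 1, p.1 * x.1 0 * (p.2 * x.1 1)], by simp⟩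
  invFun y := (cx x y, cy x y)
  left_inv p := by simp [cx, cy]
  right_inv y := by
    ext i
    have := y.2
    fin_cases i <;> simp [cx, cy, this]

theorem cx_coord (x : XG G) (a b : G) : cx x (coordEquiv x (a, b)) = a := by
  simp [cx, coordEquiv]
theorem cy_coord (x : XG G) (a b : G) : cy x (coordEquiv x (a, b)) = b := by
  simp [cy, coordEquiv]

theorem sum_XG (x : XG G) (f : G → G → F) :
    ∑ y : XG G, f (cx x y) (cy x y) = ∑ a, ∑ b, f a b := by
  rw [← Equiv.sum_comp (coordEquiv x), Fintype.sum_prod_type]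
  simp [cx_coord, cy_coord]

def tc (k : Fin 3) (a b : G) : G := ![a, b, a * b] k

theorem coord_inj (x y z : XG G) (h1 : cx x y = cx x z) (h2 : cy x y = cy x z) : y = z := by
  apply (coordEquiv x).symm.injective
  exact Prod.ext h1 h2

theorem coord_eq_iff (hc : ∀ a b : G, a * b = b * a) (x y z : XG G) (k : Fin 3) :
    y.1 k = z.1 k ↔ tc k (cx x y) (cy x y) = tc k (cx x z) (cy x z) := by
  have e : ∀ y : XG G, cx x y * cy x y = y.1 2 * ((x.1 0)⁻¹ * (x.1 1)⁻¹) := by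
    intro y
    rw [← y.2]
    simp only [cx, cy, mul_assoc]
    congr 1
    rw [← mul_assoc, ← mul_assoc, hc _ (y.1 1)]
  fin_cases k
  · simp [tc, cx]
  · simp [tc, cy]
  · simp [tc, e]

theorem eq_of_two (y z : XG G) (k l : Fin 3) (hkl : k ≠ l)
    (h1 : y.1 k = z.1 k) (h2 : y.1 l = z.1 l) : y = z := by
  have hy := y.2
  have hz := z.2
  have k1 : y.1 0 = z.1 0 → y.1 2 = z.1 2 → y.1 1 = z.1 1 := by
    intro a b; apply mul_left_cancel (a := y.1 0); rw [hy, b, a, hz]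
  have k2 : y.1 1 = z.1 1 → y.1 2 = z.1 2 → y.1 0 = z.1 0 := by
    intro a b; apply mul_right_cancel (b := y.1 1); rw [hy, b, a, hz]
  have key : y.1 0 = z.1 0 ∧ y.1 1 = z.1 1 := by
    clear hy hz
    fin_cases k <;> fin_cases l <;> simp_all
  ext i
  fin_cases i
  · exact key.1
  · exact key.2
  · simp [← hy, ← hz, key.1, key.2]

theorem rel_iff (hc : ∀ a b : G, a * b = b * a) (hsq : ∀ a : G, a * a = 1) (x y : XG G)
    (i : Fin 5) : rel i x y ↔ ks x y = i := by
  have h0 : x.1 0 = y.1 0 ↔ cx x y = 1 := by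
    unfold cx; rw [mul_inv_eq_one, eq_comm]
  have h1 : x.1 1 = y.1 1 ↔ cy x y = 1 := by
    unfold cy; rw [mul_inv_eq_one, eq_comm]
  have hx0 : cx x x = 1 := by simp [cx]
  have hx1 : cy x x = 1 := by simp [cy]
  have h2 : x.1 2 = y.1 2 ↔ cx x y = cy x y := by
    rw [coord_eq_iff hc x x y 2]
    simp only [tc, hx0, hx1]
    simp only [mul_one]
    change 1 = cx x y * cy x y ↔ _
    constructor
    · intro h
      have := congrArg (· * cy x y) h
      simpa [mul_assoc, hsq] using this.symm
    · intro h; rw [h, hsq]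
  have hxy : x = y ↔ cx x y = 1 ∧ cy x y = 1 := by
    constructor
    · rintro rfl; exact ⟨hx0, hx1⟩
    · rintro ⟨h, h'⟩; exact coord_inj x x y (by rw [hx0, h]) (by rw [hx1, h'])
  unfold ks kl
  generalize cx x y = a at *
  generalize cy x y = b at *
  fin_cases i <;> simp [rel, cIdx, Fin.forall_fin_succ, h0, h1, h2, hxy] <;>
    by_cases ha : a = 1 <;> by_cases hb : b = 1 <;> by_cases hab : a = b <;> simp_all

def zk (k : Fin 3) (i : Fin 5) : Prop := i = 0 ∨ i = k.succ.castSucc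
instance (k : Fin 3) (i : Fin 5) : Decidable (zk k i) := by unfold zk; infer_instance

def sk (k : Fin 3) (α : Fin 6) : Bool :=
  ![![false, true, true, true, false, false], ![true, false, true, false, true, false],
    ![true, true, false, false, false, true]] k α

theorem sum_sk (hsq : ∀ a : G, a * a = 1) (k : Fin 3) (a b g : G) :
    ∑ α : Fin 6, (if sk k α then (1 : F) else 0) *
      (if kl a b = cA α then pr F (lb α a b) g else 0) = pr F (tc k a b) g := by
  fin_cases k <;> simp [Fin.sum_univ_succ, sk, cA, lb, tc, kl] <;>
    by_cases ha : a = 1 <;> by_cases hb : b = 1 <;> by_cases hab : a = b <;>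
    simp_all [pr_one_left]

theorem tc_eq_one (hsq : ∀ a : G, a * a = 1) (k : Fin 3) (a b : G) :
    tc k a b = 1 ↔ zk k (kl a b) := by
  have h2 : a * b = 1 ↔ a = b := by
    constructor
    · intro h
      have := congrArg (· * b) h
      simpa [mul_assoc, hsq] using this
    · intro h; rw [h, hsq]
  fin_cases k <;> simp [tc, kl, zk, h2] <;>
    by_cases ha : a = 1 <;> by_cases hb : b = 1 <;> by_cases hab : a = b <;>
    simp_all

theorem eq_pr (s t : G) : (if s = t then (1 : F) else 0) = pr F s t +
    (if s = 1 then (if t = 1 then 1 else 0) else (if t = 1 then 0 else 1 / 3)) := by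
  unfold pr
  by_cases hs : s = 1 <;> by_cases ht : t = 1
  · simp [hs, ht]
  · simp [hs, ht, Ne.symm ht]
  · simp [hs, ht]
  · simp [hs, ht]

def Lm (F : Type) [Field F] (x : XG G) : Matrix (XG G) (Fin 6 × G) F :=
  Matrix.of fun y k => if ks x y = cA k.1 then pr F (lb k.1 (cx x y) (cy x y)) k.2 else 0

def Dm (F : Type) [Field F] (x : XG G) : Matrix (XG G) (Fin 5) F :=
  Matrix.of fun y i => if ks x y = i then 1 else 0

def Em (F : Type) [Field F] (x : XG G) (i : Fin 5) : Matrix (XG G) (XG G) F :=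
  Matrix.diagonal fun y => if ks x y = i then 1 else 0

def Pm (F : Type) [Field F] (G : Type) [Group G] [DecidableEq G] : Matrix G G F :=
  Matrix.of fun u g => pr F u g

def eA (F : Type) [Field F] (i : Fin 5) : Matrix (Fin 6) (Fin 6) F :=
  Matrix.diagonal fun α => if cA α = i then 1 else 0

def eB (F : Type) [Field F] (i : Fin 5) : Matrix (Fin 5) (Fin 5) F :=
  Matrix.diagonal fun j => if j = i then 1 else 0

def dM (F : Type) [Field F] : Matrix (Fin 5) (Fin 5) F :=
  Matrix.diagonal fun j => (dlt j : F)

theorem LL (h3 : (3 : F) ≠ 0) (hn : (Fintype.card G : F) = 4) (hsq : ∀ a : G, a * a = 1)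
    (x : XG G) : (Lm F x)ᵀ * Lm F x = gM F ⊗ₖ Pm F G := by
  ext ⟨α, g⟩ ⟨β, h⟩
  rw [Matrix.mul_apply, Matrix.kroneckerMap_apply]
  simp only [Matrix.transpose_apply, Lm, Matrix.of_apply, ks, Pm]
  rw [← gram h3 hn hsq α β g h]
  exact sum_XG x (fun a b => (if kl a b = cA α then pr F (lb α a b) g else 0) *
      (if kl a b = cA β then pr F (lb β a b) h else 0))

theorem LD (h3 : (3 : F) ≠ 0) (hn : (Fintype.card G : F) = 4) (hsq : ∀ a : G, a * a = 1)
    (x : XG G) : (Lm F x)ᵀ * Dm F x = 0 := by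
  ext ⟨α, g⟩ i
  rw [Matrix.mul_apply]
  simp only [Matrix.transpose_apply, Lm, Dm, Matrix.of_apply, ks, Matrix.zero_apply]
  refine (sum_XG x (fun a b => (if kl a b = cA α then pr F (lb α a b) g else 0) *
      (if kl a b = i then 1 else 0))).trans ?_
  by_cases h : cA α = i
  · subst h
    refine Eq.trans ?_ (sum_lab h3 hn hsq α g)
    refine Finset.sum_congr rfl fun a _ => Finset.sum_congr rfl fun b _ => ?_
    split_ifs <;> simp
  · refine Finset.sum_eq_zero fun a _ => Finset.sum_eq_zero fun b _ => ?_
    split_ifs with h1 h2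
    · exact absurd (h1.symm.trans h2) h
    all_goals simp

theorem DD (hn : (Fintype.card G : F) = 4) (x : XG G) : (Dm F x)ᵀ * Dm F x = dM F := by
  ext i j
  rw [Matrix.mul_apply]
  simp only [Matrix.transpose_apply, Dm, Matrix.of_apply, ks, dM, Matrix.diagonal_apply]
  refine (sum_XG x (fun a b => (if kl a b = i then (1 : F) else 0) *
    (if kl a b = j then 1 else 0))).trans ?_
  by_cases h : i = j
  · subst h
    rw [if_pos rfl, ← sum_cls hn i]
    refine Finset.sum_congr rfl fun a _ => Finset.sum_congr rfl fun b _ => ?_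
    split_ifs <;> simp
  · rw [if_neg h]
    refine Finset.sum_eq_zero fun a _ => Finset.sum_eq_zero fun b _ => ?_
    split_ifs with h1 h2
    · exact absurd (h1.symm.trans h2) h
    all_goals simp

theorem EL (x : XG G) (i : Fin 5) :
    Em F x i * Lm F x = Lm F x * (eA F i ⊗ₖ (1 : Matrix G G F)) := by
  unfold eA
  rw [← Matrix.diagonal_one, Matrix.diagonal_kronecker_diagonal]
  ext y ⟨α, g⟩
  rw [Em, Matrix.diagonal_mul, Matrix.mul_diagonal]
  simp only [Lm, Matrix.of_apply]
  by_cases h : ks x y = cA α <;> simp [h]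

theorem ED (x : XG G) (i : Fin 5) : Em F x i * Dm F x = Dm F x * eB F i := by
  ext y j
  rw [Em, Matrix.diagonal_mul, eB, Matrix.mul_diagonal]
  simp only [Dm, Matrix.of_apply]
  by_cases h : ks x y = j <;> simp [h]

theorem LP (h3 : (3 : F) ≠ 0) (hn : (Fintype.card G : F) = 4) (x : XG G) :
    Lm F x * ((1 : Matrix (Fin 6) (Fin 6) F) ⊗ₖ Pm F G) = Lm F x := by
  ext y ⟨α, g⟩
  rw [Matrix.mul_apply, Fintype.sum_prod_type]
  simp only [Matrix.kroneckerMap_apply, Matrix.one_apply]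
  rw [Finset.sum_eq_single α]
  · simp only [if_true, one_mul, Lm, Pm, Matrix.of_apply]
    split_ifs
    · conv_lhs => enter [2, u]; rw [pr_symm _ u]
      rw [sum_pr_pr h3 hn]
    · simp
  · intro β _ hb; simp [hb]
  · simp

def lk (x : XG G) (P : Matrix (Fin 6) (Fin 6) F) : Matrix (XG G) (XG G) F :=
  Lm F x * (P ⊗ₖ (1 : Matrix G G F)) * (Lm F x)ᵀ

def dk (x : XG G) (Q : Matrix (Fin 5) (Fin 5) F) : Matrix (XG G) (XG G) F :=
  Dm F x * Q * (Dm F x)ᵀ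

theorem lk_add (x : XG G) (P P' : Matrix (Fin 6) (Fin 6) F) :
    lk x (P + P') = lk x P + lk x P' := by
  simp [lk, Matrix.add_kronecker, Matrix.mul_add, Matrix.add_mul]
theorem lk_smul (x : XG G) (c : F) (P : Matrix (Fin 6) (Fin 6) F) :
    lk x (c • P) = c • lk x P := by
  simp [lk, Matrix.smul_kronecker]
theorem lk_zero (x : XG G) : lk x (0 : Matrix (Fin 6) (Fin 6) F) = 0 := by
  simp [lk]
theorem dk_add (x : XG G) (P P' : Matrix (Fin 5) (Fin 5) F) :
    dk x (P + P') = dk x P + dk x P' := by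
  simp [dk, Matrix.mul_add, Matrix.add_mul]
theorem dk_smul (x : XG G) (c : F) (P : Matrix (Fin 5) (Fin 5) F) :
    dk x (c • P) = c • dk x P := by
  simp [dk]
theorem dk_zero (x : XG G) : dk x (0 : Matrix (Fin 5) (Fin 5) F) = 0 := by
  simp [dk]

theorem kmul (A B : Matrix (Fin 6) (Fin 6) F) :
    (A * B) ⊗ₖ (1 : Matrix G G F) = (A ⊗ₖ (1 : Matrix G G F)) * (B ⊗ₖ (1 : Matrix G G F)) := by
  rw [← Matrix.mul_kronecker_mul, Matrix.one_mul]

theorem kP (A : Matrix (Fin 6) (Fin 6) F) :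
    A ⊗ₖ Pm F G = ((1 : Matrix (Fin 6) (Fin 6) F) ⊗ₖ Pm F G) * (A ⊗ₖ (1 : Matrix G G F)) := by
  rw [← Matrix.mul_kronecker_mul, Matrix.one_mul, Matrix.mul_one]

theorem kP2 (A : Matrix (Fin 6) (Fin 6) F) :
    A ⊗ₖ Pm F G = (A ⊗ₖ (1 : Matrix G G F)) * ((1 : Matrix (Fin 6) (Fin 6) F) ⊗ₖ Pm F G) := by
  rw [← Matrix.mul_kronecker_mul, Matrix.one_mul, Matrix.mul_one]

theorem lk_mul_lk (h3 : (3 : F) ≠ 0) (hn : (Fintype.card G : F) = 4)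
    (hsq : ∀ a : G, a * a = 1) (x : XG G) (P P' : Matrix (Fin 6) (Fin 6) F) :
    lk x P * lk x P' = lk x (P * gM F * P') := by
  calc lk x P * lk x P' = Lm F x * ((P ⊗ₖ (1 : Matrix G G F)) * ((Lm F x)ᵀ * Lm F x)
          * (P' ⊗ₖ (1 : Matrix G G F))) * (Lm F x)ᵀ := by
        simp only [lk, Matrix.mul_assoc]
    _ = Lm F x * ((P * gM F * P') ⊗ₖ Pm F G) * (Lm F x)ᵀ := by
        rw [LL h3 hn hsq, ← Matrix.mul_kronecker_mul, ← Matrix.mul_kronecker_mul, Matrix.one_mul,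
          Matrix.mul_one]
    _ = lk x (P * gM F * P') := by
        rw [kP, ← Matrix.mul_assoc, LP h3 hn, lk]

theorem DL (h3 : (3 : F) ≠ 0) (hn : (Fintype.card G : F) = 4) (hsq : ∀ a : G, a * a = 1)
    (x : XG G) : (Dm F x)ᵀ * Lm F x = 0 := by
  have := congrArg Matrix.transpose (LD (F := F) h3 hn hsq x)
  simpa using this

theorem lk_mul_dk (h3 : (3 : F) ≠ 0) (hn : (Fintype.card G : F) = 4)
    (hsq : ∀ a : G, a * a = 1) (x : XG G) (P : Matrix (Fin 6) (Fin 6) F)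
    (Q : Matrix (Fin 5) (Fin 5) F) : lk x P * dk x Q = 0 := by
  calc lk x P * dk x Q = Lm F x * (P ⊗ₖ (1 : Matrix G G F)) * ((Lm F x)ᵀ * Dm F x)
          * (Q * (Dm F x)ᵀ) := by
        simp only [lk, dk, Matrix.mul_assoc]
    _ = 0 := by rw [LD h3 hn hsq]; simp

theorem dk_mul_lk (h3 : (3 : F) ≠ 0) (hn : (Fintype.card G : F) = 4)
    (hsq : ∀ a : G, a * a = 1) (x : XG G) (P : Matrix (Fin 6) (Fin 6) F)
    (Q : Matrix (Fin 5) (Fin 5) F) : dk x Q * lk x P = 0 := by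
  calc dk x Q * lk x P = Dm F x * Q * ((Dm F x)ᵀ * Lm F x) *
          ((P ⊗ₖ (1 : Matrix G G F)) * (Lm F x)ᵀ) := by
        simp only [lk, dk, Matrix.mul_assoc]
    _ = 0 := by rw [DL h3 hn hsq]; simp

theorem dk_mul_dk (hn : (Fintype.card G : F) = 4) (x : XG G) (Q Q' : Matrix (Fin 5) (Fin 5) F) :
    dk x Q * dk x Q' = dk x (Q * dM F * Q') := by
  rw [← DD hn x]
  simp only [dk, Matrix.mul_assoc]

theorem E_lk (x : XG G) (i : Fin 5) (P : Matrix (Fin 6) (Fin 6) F) :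
    Em F x i * lk x P = lk x (eA F i * P) := by
  simp only [lk, kmul, ← Matrix.mul_assoc, EL]

theorem lk_tr (x : XG G) (P : Matrix (Fin 6) (Fin 6) F) : (lk x P)ᵀ = lk x Pᵀ := by
  have : (P ⊗ₖ (1 : Matrix G G F))ᵀ = Pᵀ ⊗ₖ (1 : Matrix G G F) := by
    rw [← Matrix.kroneckerMap_transpose, Matrix.transpose_one]
  simp [lk, this, Matrix.mul_assoc]

theorem dk_tr (x : XG G) (P : Matrix (Fin 5) (Fin 5) F) : (dk x P)ᵀ = dk x Pᵀ := by
  simp [dk, Matrix.mul_assoc]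

theorem Em_tr (x : XG G) (i : Fin 5) : (Em F x i)ᵀ = Em F x i := by simp [Em]
theorem eA_tr (i : Fin 5) : (eA F i)ᵀ = eA F i := by simp [eA]
theorem eB_tr (i : Fin 5) : (eB F i)ᵀ = eB F i := by simp [eB]

theorem lk_E (x : XG G) (i : Fin 5) (P : Matrix (Fin 6) (Fin 6) F) :
    lk x P * Em F x i = lk x (P * eA F i) := by
  have := congrArg Matrix.transpose (E_lk x i Pᵀ)
  simpa [lk_tr, Em_tr, eA_tr] using this

theorem E_dk (x : XG G) (i : Fin 5) (P : Matrix (Fin 5) (Fin 5) F) :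
    Em F x i * dk x P = dk x (eB F i * P) := by
  simp only [dk, ← Matrix.mul_assoc, ED]

theorem dk_E (x : XG G) (i : Fin 5) (P : Matrix (Fin 5) (Fin 5) F) :
    dk x P * Em F x i = dk x (P * eB F i) := by
  have := congrArg Matrix.transpose (E_dk x i Pᵀ)
  simpa [dk_tr, Em_tr, eB_tr] using this

theorem E_E (x : XG G) (i : Fin 5) : Em F x i * Em F x i = Em F x i := by
  simp [Em]

def nf (x : XG G) (c : F) (P : Matrix (Fin 6) (Fin 6) F) (Q : Matrix (Fin 5) (Fin 5) F) :
    Matrix (XG G) (XG G) F := c • Em F x 4 + lk x P + dk x Q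

theorem nf_mul (h3 : (3 : F) ≠ 0) (hn : (Fintype.card G : F) = 4)
    (hsq : ∀ a : G, a * a = 1) (x : XG G) (c c' : F) (P P' : Matrix (Fin 6) (Fin 6) F)
    (Q Q' : Matrix (Fin 5) (Fin 5) F) :
    nf x c P Q * nf x c' P' Q' = nf x (c * c') (c • (eA F 4 * P') + c' • (P * eA F 4)
      + P * gM F * P') (c • (eB F 4 * Q') + c' • (Q * eB F 4) + Q * dM F * Q') := by
  simp only [nf, Matrix.add_mul, Matrix.mul_add, Matrix.smul_mul, Matrix.mul_smul, E_E, E_lk,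
    lk_E, E_dk, dk_E, lk_mul_lk h3 hn hsq, lk_mul_dk h3 hn hsq, dk_mul_lk h3 hn hsq,
    dk_mul_dk hn, lk_add, dk_add, lk_smul, dk_smul, smul_smul, smul_add]
  rw [mul_comm c' c]
  abel

theorem nf_add (x : XG G) (c c' : F) (P P' : Matrix (Fin 6) (Fin 6) F)
    (Q Q' : Matrix (Fin 5) (Fin 5) F) :
    nf x c P Q + nf x c' P' Q' = nf x (c + c') (P + P') (Q + Q') := by
  simp only [nf, lk_add, dk_add, add_smul]
  abel

theorem nf_smul (x : XG G) (r c : F) (P : Matrix (Fin 6) (Fin 6) F)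
    (Q : Matrix (Fin 5) (Fin 5) F) :
    r • nf x c P Q = nf x (r * c) (r • P) (r • Q) := by
  simp only [nf, lk_smul, dk_smul, smul_add, smul_smul]

theorem dk_apply (x y z : XG G) (Q : Matrix (Fin 5) (Fin 5) F) :
    dk x Q y z = Q (ks x y) (ks x z) := by
  simp [dk, Matrix.mul_apply, Dm]

theorem lk_vec_apply (x y z : XG G) (u w : Fin 6 → F) :
    lk x (Matrix.vecMulVec u w) y z
      = ∑ g, (∑ α, u α * Lm F x y (α, g)) * (∑ β, w β * Lm F x z (β, g)) := by
  simp only [lk, Matrix.mul_apply, Matrix.transpose_apply, Matrix.kroneckerMap_apply,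
    Fintype.sum_prod_type, Matrix.vecMulVec_apply, Matrix.one_apply, mul_ite, mul_one, mul_zero,
    Finset.sum_ite_eq', Finset.sum_ite_eq, Finset.mem_univ, if_true]
  rw [Finset.sum_comm]
  refine Finset.sum_congr rfl fun g _ => ?_
  rw [Finset.mul_sum]
  refine Finset.sum_congr rfl fun β _ => ?_
  rw [Finset.sum_mul, Finset.sum_mul]
  refine Finset.sum_congr rfl fun α _ => ?_
  ring

def uk (F : Type) [Field F] (k : Fin 3) (α : Fin 6) : F := if sk k α then 1 else 0

def Qk (F : Type) [Field F] (k : Fin 3) : Matrix (Fin 5) (Fin 5) F := Matrix.of fun i j =>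
  if zk k i then (if zk k j then 1 else 0) else (if zk k j then 0 else 1 / 3)

def Cm (F : Type) [Field F] {G : Type} [Group G] [DecidableEq G] (k : Fin 3) :
    Matrix (XG G) (XG G) F := Matrix.of fun y z => if y.1 k = z.1 k then 1 else 0

theorem Cm_eq (h3 : (3 : F) ≠ 0) (hn : (Fintype.card G : F) = 4)
    (hsq : ∀ a : G, a * a = 1) (hc : ∀ a b : G, a * b = b * a) (x : XG G) (k : Fin 3) :
    (Cm F k : Matrix (XG G) (XG G) F)
      = lk x (Matrix.vecMulVec (uk F k) (uk F k)) + dk x (Qk F k) := by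
  ext y z
  have e : ∀ y g, ∑ α, uk F k α * Lm F x y (α, g) = pr F (tc k (cx x y) (cy x y)) g := by
    intro y g
    exact sum_sk hsq k (cx x y) (cy x y) g
  rw [Matrix.add_apply, lk_vec_apply, dk_apply]
  simp only [e, Cm, Matrix.of_apply, Qk]
  have e2 : ∀ s t : G, ∑ g, pr F s g * pr F t g = pr F s t := by
    intro s t
    rw [← sum_pr_pr h3 hn s t]
    refine Finset.sum_congr rfl fun g _ => ?_
    rw [pr_symm s, pr_symm t]
  simp only [e2, ks, ← tc_eq_one hsq]
  rw [← eq_pr]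
  simp only [coord_eq_iff hc x y z k]

theorem DualE_eq (hc : ∀ a b : G, a * b = b * a) (hsq : ∀ a : G, a * a = 1) (x : XG G)
    (i : Fin 5) : DualE F x i = Em F x i := by
  ext y z
  simp only [DualE, Em, Matrix.of_apply, Matrix.diagonal_apply, rel_iff hc hsq]
  by_cases h : y = z <;> simp [h]

theorem Adj_zero : (Adj F 0 : Matrix (XG G) (XG G) F) = 1 := by
  ext y z
  simp [Adj, rel, Matrix.one_apply]

theorem cIdx_succ (k : Fin 3) : cIdx k.succ.castSucc = k := by
  fin_cases k <;> rfl

theorem Adj_mid (k : Fin 3) :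
    (Adj F k.succ.castSucc : Matrix (XG G) (XG G) F) = Cm F k - 1 := by
  ext y z
  have h0 : k.succ.castSucc ≠ (0 : Fin 5) := by revert k; decide
  have h4 : k.succ.castSucc ≠ (4 : Fin 5) := by revert k; decide
  simp only [Adj, rel, h0, h4, Cm, Matrix.of_apply, Matrix.sub_apply, Matrix.one_apply, if_false,
    cIdx_succ]
  by_cases h : y = z
  · simp [h]
  · simp [h]

def Jm (F : Type) [Field F] (m : Type) : Matrix m m F := Matrix.of fun _ _ => 1

theorem Adj_four : (Adj F 4 : Matrix (XG G) (XG G) F)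
    = Jm F (XG G) + (2 : F) • 1 + (-1 : F) • (Cm F 0 + Cm F 1 + Cm F 2) := by
  ext y z
  have e01 := eq_of_two y z 0 1 (by decide)
  have e02 := eq_of_two y z 0 2 (by decide)
  have e12 := eq_of_two y z 1 2 (by decide)
  simp only [Adj, rel, Jm, Cm, Matrix.of_apply, Matrix.add_apply, Matrix.smul_apply,
    Matrix.one_apply, Fin.forall_fin_succ]
  by_cases h : y = z
  · subst h; simp; norm_num
  · by_cases h0 : y.1 0 = z.1 0 <;> by_cases h1 : y.1 1 = z.1 1 <;>
      by_cases h2 : y.1 2 = z.1 2 <;> simp_all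

theorem Jm_dk (x : XG G) : Jm F (XG G) = dk x (Jm F (Fin 5)) := by
  ext y z
  rw [dk_apply]; rfl

def IsNF (x : XG G) (M : Matrix (XG G) (XG G) F) : Prop := ∃ c P Q, M = nf x c P Q

theorem IsNF.add {x : XG G} {M N : Matrix (XG G) (XG G) F} (hM : IsNF x M) (hN : IsNF x N) :
    IsNF x (M + N) := by
  obtain ⟨c, P, Q, rfl⟩ := hM
  obtain ⟨c', P', Q', rfl⟩ := hN
  exact ⟨_, _, _, nf_add ..⟩

theorem IsNF.smul {x : XG G} {M : Matrix (XG G) (XG G) F} (r : F) (hM : IsNF x M) :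
    IsNF x (r • M) := by
  obtain ⟨c, P, Q, rfl⟩ := hM
  exact ⟨_, _, _, nf_smul ..⟩

theorem IsNF.lk_dk (x : XG G) (P : Matrix (Fin 6) (Fin 6) F) (Q : Matrix (Fin 5) (Fin 5) F) :
    IsNF x (lk x P + dk x Q) := ⟨0, P, Q, by simp [nf]⟩

theorem IsNF.dk (x : XG G) (Q : Matrix (Fin 5) (Fin 5) F) :
    IsNF x (dk x Q) := ⟨0, 0, Q, by simp [nf, lk_zero]⟩

theorem ks_coord (hc : ∀ a b : G, a * b = b * a) (hsq : ∀ a : G, a * a = 1)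
    (x y : XG G) (k : Fin 3) (h : zk k (ks x y)) : y.1 k = x.1 k := by
  rw [coord_eq_iff hc x, (tc_eq_one hsq k _ _).2 h]
  have hx0 : cx x x = 1 := by simp [cx]
  have hx1 : cy x x = 1 := by simp [cy]
  rw [hx0, hx1]
  fin_cases k <;> simp [tc]

theorem Em_mid (hc : ∀ a b : G, a * b = b * a) (hsq : ∀ a : G, a * a = 1) (x : XG G)
    (k l : Fin 3) (hkl : k ≠ l) :
    Em F x k.succ.castSucc * Cm F l * Em F x k.succ.castSucc = Em F x k.succ.castSucc := by
  generalize hi : k.succ.castSucc = i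
  ext y z
  simp only [Em, Matrix.mul_diagonal, Matrix.diagonal_mul, Matrix.diagonal_apply, Cm,
    Matrix.of_apply]
  by_cases h : y = z
  · subst h; by_cases h1 : ks x y = i <;> simp [h1]
  · by_cases h1 : ks x y = i <;> by_cases h2 : ks x z = i <;>
      simp [h1, h2, h]
    intro h3
    refine h (eq_of_two y z k l hkl ?_ h3)
    rw [ks_coord hc hsq x y k (Or.inr (h1.trans hi.symm)),
      ks_coord hc hsq x z k (Or.inr (h2.trans hi.symm))]

theorem Em_zero (hc : ∀ a b : G, a * b = b * a) (hsq : ∀ a : G, a * a = 1) (x : XG G) :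
    Em F x 0 = dk x (eB F 0) := by
  ext y z
  rw [dk_apply]
  simp only [Em, eB, Matrix.diagonal_apply]
  by_cases h1 : ks x y = 0 <;> by_cases h2 : ks x z = 0 <;> simp [h1, h2]
  · have : ∀ k : Fin 3, y.1 k = z.1 k := fun k => by
      rw [ks_coord hc hsq x y k (Or.inl h1), ks_coord hc hsq x z k (Or.inl h2)]
    exact Subtype.ext (funext this)
  · have h : y ≠ z := fun h => h2 (h ▸ h1)
    simp [h, Ne.symm h2]

theorem IsNF.Em (h3 : (3 : F) ≠ 0) (hn : (Fintype.card G : F) = 4)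
    (hsq : ∀ a : G, a * a = 1) (hc : ∀ a b : G, a * b = b * a) (x : XG G) (i : Fin 5) :
    IsNF x (Em F x i) := by
  have mid : ∀ k : Fin 3, IsNF x (_root_.Em F x k.succ.castSucc) := by
    intro k
    obtain ⟨l, hl⟩ : ∃ l : Fin 3, k ≠ l := by revert k; decide
    rw [← Em_mid hc hsq x k l hl, Cm_eq h3 hn hsq hc x l]
    simp only [Matrix.mul_add, Matrix.add_mul, E_lk, lk_E, E_dk, dk_E]
    exact IsNF.lk_dk ..
  fin_cases i
  · exact (Em_zero (F := F) hc hsq x) ▸ IsNF.dk x _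
  · exact mid 0
  · exact mid 1
  · exact mid 2
  · exact ⟨1, 0, 0, by simp [nf, lk_zero, dk_zero]⟩

theorem sum_Em (x : XG G) : ∑ i, Em F x i = 1 := by
  ext y z
  rw [Matrix.sum_apply]
  simp only [Em, Matrix.diagonal_apply, Matrix.one_apply]
  by_cases h : y = z <;> simp [h]

theorem IsNF.one (h3 : (3 : F) ≠ 0) (hn : (Fintype.card G : F) = 4)
    (hsq : ∀ a : G, a * a = 1) (hc : ∀ a b : G, a * b = b * a) (x : XG G) :
    IsNF x (1 : Matrix (XG G) (XG G) F) := by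
  rw [← sum_Em x, Fin.sum_univ_five]
  have := IsNF.Em (F := F) h3 hn hsq hc x
  exact ((((this 0).add (this 1)).add (this 2)).add (this 3)).add (this 4)

theorem fin5_cases (b : Fin 5) : b = 0 ∨ b = 4 ∨ ∃ k : Fin 3, b = k.succ.castSucc := by
  revert b; decide

theorem IsNF.Adj (h3 : (3 : F) ≠ 0) (hn : (Fintype.card G : F) = 4)
    (hsq : ∀ a : G, a * a = 1) (hc : ∀ a b : G, a * b = b * a) (x : XG G) (b : Fin 5) :
    IsNF x (Adj F b : Matrix (XG G) (XG G) F) := by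
  have h1 := IsNF.one (F := F) h3 hn hsq hc x
  have hC : ∀ k, IsNF x (Cm F k : Matrix (XG G) (XG G) F) := fun k => by
    rw [Cm_eq h3 hn hsq hc x k]; exact IsNF.lk_dk ..
  rcases fin5_cases b with rfl | rfl | ⟨k, rfl⟩
  · rw [Adj_zero]; exact h1
  · rw [Adj_four, Jm_dk x]
    exact ((IsNF.dk x _).add (h1.smul _)).add ((((hC 0).add (hC 1)).add (hC 2)).smul _)
  · rw [Adj_mid, sub_eq_add_neg, ← neg_one_smul F]
    exact (hC k).add (h1.smul _)

theorem IsNF.mul (h3 : (3 : F) ≠ 0) (hn : (Fintype.card G : F) = 4)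
    (hsq : ∀ a : G, a * a = 1) {x : XG G} {M N : Matrix (XG G) (XG G) F}
    (hM : IsNF x M) (hN : IsNF x N) : IsNF x (M * N) := by
  obtain ⟨c, P, Q, rfl⟩ := hM
  obtain ⟨c', P', Q', rfl⟩ := hN
  exact ⟨_, _, _, nf_mul h3 hn hsq ..⟩

theorem IsNF.of_mem (h3 : (3 : F) ≠ 0) (hn : (Fintype.card G : F) = 4)
    (hsq : ∀ a : G, a * a = 1) (hc : ∀ a b : G, a * b = b * a) (x : XG G)
    {M : Matrix (XG G) (XG G) F} (hM : M ∈ TerwilligerAlg F G x) : IsNF x M := by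
  unfold TerwilligerAlg at hM
  induction hM using Algebra.adjoin_induction with
  | mem M hM =>
    obtain ⟨a, b, c, rfl⟩ := hM
    rw [DualE_eq hc hsq, DualE_eq hc hsq]
    exact IsNF.mul h3 hn hsq (IsNF.mul h3 hn hsq (IsNF.Em h3 hn hsq hc x a)
      (IsNF.Adj h3 hn hsq hc x b)) (IsNF.Em h3 hn hsq hc x c)
  | algebraMap r =>
    rw [Algebra.algebraMap_eq_smul_one]
    exact (IsNF.one h3 hn hsq hc x).smul r
  | add M N _ _ h1 h2 => exact h1.add h2
  | mul M N _ _ h1 h2 => exact IsNF.mul h3 hn hsq h1 h2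

/-! ### normal forms lie in the Terwilliger algebra -/

theorem Em_mem (hsq : ∀ a : G, a * a = 1) (hc : ∀ a b : G, a * b = b * a) (x : XG G)
    (i : Fin 5) : Em F x i ∈ TerwilligerAlg F G x := by
  apply Algebra.subset_adjoin
  refine ⟨i, 0, i, ?_⟩
  rw [DualE_eq hc hsq, Adj_zero, Matrix.mul_one, E_E]

theorem Adj_mem (hsq : ∀ a : G, a * a = 1) (hc : ∀ a b : G, a * b = b * a) (x : XG G)
    (b : Fin 5) : (Adj F b : Matrix (XG G) (XG G) F) ∈ TerwilligerAlg F G x := by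
  have : (Adj F b : Matrix (XG G) (XG G) F)
      = ∑ i, ∑ j, DualE F x i * Adj F b * DualE F x j := by
    simp only [DualE_eq hc hsq, ← Matrix.mul_sum, ← Matrix.sum_mul, sum_Em, Matrix.one_mul,
      Matrix.mul_one]
  rw [this]
  refine Subalgebra.sum_mem _ fun i _ => Subalgebra.sum_mem _ fun j _ => ?_
  exact Algebra.subset_adjoin ⟨i, b, j, rfl⟩

theorem Cm_mem (hsq : ∀ a : G, a * a = 1) (hc : ∀ a b : G, a * b = b * a) (x : XG G)
    (k : Fin 3) : (Cm F k : Matrix (XG G) (XG G) F) ∈ TerwilligerAlg F G x := by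
  have := Subalgebra.add_mem _ (Adj_mem (F := F) hsq hc x k.succ.castSucc)
    (Subalgebra.one_mem (TerwilligerAlg F G x))
  rwa [Adj_mid, sub_add_cancel] at this

theorem Jm_mem (hsq : ∀ a : G, a * a = 1) (hc : ∀ a b : G, a * b = b * a) (x : XG G) :
    Jm F (XG G) ∈ TerwilligerAlg F G x := by
  have hC := Cm_mem (F := F) hsq hc x
  have h4 := Adj_mem (F := F) hsq hc x 4
  have e : Jm F (XG G) = Adj F 4 + (-2 : F) • 1 + (Cm F 0 + Cm F 1 + Cm F 2) := by
    rw [Adj_four]; module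
  rw [e]
  exact add_mem (add_mem h4 (Subalgebra.smul_mem _ (Subalgebra.one_mem _) _))
    (add_mem (add_mem (hC 0) (hC 1)) (hC 2))

theorem dk_mem (hsq : ∀ a : G, a * a = 1) (hc : ∀ a b : G, a * b = b * a) (x : XG G)
    (Q : Matrix (Fin 5) (Fin 5) F) : dk x Q ∈ TerwilligerAlg F G x := by
  induction Q using Matrix.induction_on' with
  | h_zero => rw [dk_zero]; exact zero_mem _
  | h_add P Q h1 h2 => rw [dk_add]; exact add_mem h1 h2
  | h_std_basis i j c =>
    have : dk x (Matrix.single i j c) = c • (Em F x i * Jm F (XG G) * Em F x j) := by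
      rw [Jm_dk x, E_dk, dk_E, ← dk_smul]
      congr 1
      ext a b
      simp only [eB, Matrix.smul_apply, Matrix.mul_diagonal, Matrix.diagonal_mul, Jm,
        Matrix.of_apply, Matrix.single_apply]
      have e1 : (i = a) = (a = i) := propext eq_comm
      have e2 : (j = b) = (b = j) := propext eq_comm
      simp only [e1, e2]
      by_cases h1 : a = i <;> by_cases h2 : b = j <;> simp [h1, h2]
    rw [this]
    exact Subalgebra.smul_mem _ (mul_mem (mul_mem (Em_mem hsq hc x i) (Jm_mem hsq hc x))
      (Em_mem hsq hc x j)) _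

theorem sk_uniq : ∀ (k : Fin 3) (a α : Fin 6), sk k α = true →
    ((sk k a = true ∧ cA a = cA α) ↔ a = α) := by decide

theorem lk_single_mem (h3 : (3 : F) ≠ 0) (hn : (Fintype.card G : F) = 4)
    (hsq : ∀ a : G, a * a = 1) (hc : ∀ a b : G, a * b = b * a) (x : XG G)
    (k : Fin 3) (α β : Fin 6) (hα : sk k α = true) (hβ : sk k β = true) :
    lk x (Matrix.single α β (1 : F)) ∈ TerwilligerAlg F G x := by
  have e : lk x (Matrix.single α β (1 : F)) = Em F x (cA α) * Cm F k * Em F x (cA β)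
      - dk x (eB F (cA α) * Qk F k * eB F (cA β)) := by
    rw [Cm_eq h3 hn hsq hc x k, Matrix.mul_add, Matrix.add_mul, E_lk, lk_E, E_dk, dk_E,
      add_sub_cancel_right]
    congr 1
    ext a b
    simp only [eA, Matrix.mul_diagonal, Matrix.diagonal_mul, Matrix.vecMulVec_apply, uk,
      Matrix.single_apply]
    have e1 : (α = a) = (sk k a = true ∧ cA a = cA α) :=
      propext (eq_comm.trans (sk_uniq k a α hα).symm)
    have e2 : (β = b) = (sk k b = true ∧ cA b = cA β) :=
      propext (eq_comm.trans (sk_uniq k b β hβ).symm)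
    simp only [e1, e2]
    by_cases h1 : cA a = cA α <;> by_cases h2 : cA b = cA β <;> by_cases h3 : sk k a = true <;>
      by_cases h4 : sk k b = true <;> simp [h1, h2, h3, h4]
  rw [e]
  exact sub_mem (mul_mem (mul_mem (Em_mem hsq hc x _) (Cm_mem hsq hc x k)) (Em_mem hsq hc x _))
    (dk_mem hsq hc x _)

theorem lk_chain (h3 : (3 : F) ≠ 0) (hn : (Fintype.card G : F) = 4)
    (hsq : ∀ a : G, a * a = 1) (x : XG G)
    (α β γ : Fin 6) (hγ : gM F γ γ = 1) (h1 : lk x (Matrix.single α γ (1 : F)) ∈ TerwilligerAlg F G x)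
    (h2 : lk x (Matrix.single γ β (1 : F)) ∈ TerwilligerAlg F G x) :
    lk x (Matrix.single α β (1 : F)) ∈ TerwilligerAlg F G x := by
  have := mul_mem h1 h2
  rw [lk_mul_lk h3 hn hsq] at this
  convert this using 2
  simp [hγ]

theorem lk_mem (h3 : (3 : F) ≠ 0) (hn : (Fintype.card G : F) = 4)
    (hsq : ∀ a : G, a * a = 1) (hc : ∀ a b : G, a * b = b * a) (x : XG G)
    (P : Matrix (Fin 6) (Fin 6) F) : lk x P ∈ TerwilligerAlg F G x := by
  have S := lk_single_mem (F := F) h3 hn hsq hc x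
  have A : ∀ α, lk x (Matrix.single α 2 (1 : F)) ∈ TerwilligerAlg F G x := by
    intro α
    fin_cases α
    · exact S 1 0 2 rfl rfl
    · exact S 0 1 2 rfl rfl
    · exact S 0 2 2 rfl rfl
    · exact S 0 3 2 rfl rfl
    · exact S 1 4 2 rfl rfl
    · exact lk_chain h3 hn hsq x 5 2 1 rfl (S 2 5 1 rfl rfl) (S 0 1 2 rfl rfl)
  have B : ∀ α, lk x (Matrix.single 2 α (1 : F)) ∈ TerwilligerAlg F G x := by
    intro α
    fin_cases α
    · exact S 1 2 0 rfl rfl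
    · exact S 0 2 1 rfl rfl
    · exact S 0 2 2 rfl rfl
    · exact S 0 2 3 rfl rfl
    · exact S 1 2 4 rfl rfl
    · exact lk_chain h3 hn hsq x 2 5 1 rfl (S 0 2 1 rfl rfl) (S 2 1 5 rfl rfl)
  induction P using Matrix.induction_on' with
  | h_zero => rw [lk_zero]; exact zero_mem _
  | h_add P Q h1 h2 => rw [lk_add]; exact add_mem h1 h2
  | h_std_basis i j c =>
    have : Matrix.single i j c = c • Matrix.single i j (1 : F) := by simp
    rw [this, lk_smul]
    exact Subalgebra.smul_mem _ (lk_chain h3 hn hsq x i j 2 rfl (A i) (B j)) _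

theorem nf_mem (h3 : (3 : F) ≠ 0) (hn : (Fintype.card G : F) = 4)
    (hsq : ∀ a : G, a * a = 1) (hc : ∀ a b : G, a * b = b * a) (x : XG G)
    (c : F) (P : Matrix (Fin 6) (Fin 6) F) (Q : Matrix (Fin 5) (Fin 5) F) :
    nf x c P Q ∈ TerwilligerAlg F G x :=
  add_mem (add_mem (Subalgebra.smul_mem _ (Em_mem hsq hc x 4) c) (lk_mem h3 hn hsq hc x P))
    (dk_mem hsq hc x Q)

/-! ### the homomorphism -/

def kM (F : Type) [Field F] : Matrix (Fin 6) (Fin 5) F :=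
  !![1,0,0,0,0; 0,1,0,0,0; 0,0,1,0,0; 0,0,0,1,0; 0,0,0,0,1; 0,0,0,0,0]

def gi (F : Type) [Field F] : Matrix (Fin 5) (Fin 5) F :=
  !![1,0,0,0,0; 0,1,0,0,0; 0,0,1,0,0; 0,0,0,2/3,1/3; 0,0,0,1/3,2/3]

def hM (F : Type) [Field F] : Matrix (Fin 6) (Fin 6) F :=
  !![1,0,0,0,0,0; 0,1,0,0,0,0; 0,0,1,0,0,0; 0,0,0,2/3,1/3,0; 0,0,0,1/3,2/3,0; 0,0,0,0,0,0]

theorem kgk : kM F * gi F * (kM F)ᵀ = hM F := by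
  ext i j
  fin_cases i <;> fin_cases j <;>
    simp [kM, gi, hM, Matrix.mul_apply, Fin.sum_univ_succ]

theorem ghg (h3 : (3 : F) ≠ 0) : gM F * hM F * gM F = gM F := by
  ext i j
  fin_cases i <;> fin_cases j <;>
    simp [gM, hM, Matrix.mul_apply, Fin.sum_univ_succ] <;> field_simp <;> ring

theorem gi_mul (h3 : (3 : F) ≠ 0) : gi F * ((kM F)ᵀ * gM F * kM F) = 1 := by
  ext i j
  fin_cases i <;> fin_cases j <;>
    simp [gM, gi, kM, Matrix.mul_apply, Fin.sum_univ_succ] <;> field_simp <;> ring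

theorem mul_gi (h3 : (3 : F) ≠ 0) : ((kM F)ᵀ * gM F * kM F) * gi F = 1 :=
  mul_eq_one_comm.1 (gi_mul h3)

theorem eA_comm : eA F 4 * gM F = gM F * eA F 4 := by
  ext i j
  rw [eA, Matrix.mul_diagonal, Matrix.diagonal_mul]
  fin_cases i <;> fin_cases j <;> simp [gM, cA]

theorem eA_sq : eA F 4 * eA F 4 = eA F 4 := by
  simp [eA]

theorem eB_sq : eB F 4 * eB F 4 = eB F 4 := by
  simp [eB]

theorem eB_comm : eB F 4 * dM F = dM F * eB F 4 := by
  simp only [eB, dM, Matrix.diagonal_mul_diagonal, mul_comm]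

def di (F : Type) [Field F] : Matrix (Fin 5) (Fin 5) F :=
  Matrix.diagonal fun j => (dlt j : F)⁻¹

theorem di_mul (h2 : (2 : F) ≠ 0) (h3 : (3 : F) ≠ 0) : di F * dM F = 1 := by
  have h6 : (6 : F) ≠ 0 := by
    have : (6 : F) = 2 * 3 := by norm_num
    rw [this]; exact mul_ne_zero h2 h3
  rw [di, dM, Matrix.diagonal_mul_diagonal, ← Matrix.diagonal_one]
  congr 1
  ext i
  fin_cases i <;> simp [dlt, h3, h6]

theorem mul_di (h2 : (2 : F) ≠ 0) (h3 : (3 : F) ≠ 0) : dM F * di F = 1 :=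
  mul_eq_one_comm.1 (di_mul h2 h3)

def f1 (x : XG G) (M : Matrix (XG G) (XG G) F) : Matrix (Fin 5) (Fin 5) F :=
  di F * ((Dm F x)ᵀ * M * Dm F x)

def f2 (x : XG G) (a : G) (M : Matrix (XG G) (XG G) F) : Matrix (Fin 5) (Fin 5) F :=
  (3 / 2 : F) • (gi F * ((kM F)ᵀ *
    ((Lm F x)ᵀ * M * Lm F x).submatrix (fun i => (i, a)) (fun i => (i, a)) * kM F))

theorem f1_nf (h2 : (2 : F) ≠ 0) (h3 : (3 : F) ≠ 0) (hn : (Fintype.card G : F) = 4)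
    (hsq : ∀ a : G, a * a = 1) (x : XG G)
    (c : F) (P : Matrix (Fin 6) (Fin 6) F) (Q : Matrix (Fin 5) (Fin 5) F) :
    f1 x (nf x c P Q) = c • eB F 4 + Q * dM F := by
  have e1 : (Dm F x)ᵀ * Em F x 4 * Dm F x = dM F * eB F 4 := by
    rw [Matrix.mul_assoc, ED, ← Matrix.mul_assoc, DD hn]
  have e2 : (Dm F x)ᵀ * lk x P * Dm F x = 0 := by
    rw [lk, ← Matrix.mul_assoc, ← Matrix.mul_assoc, DL h3 hn hsq]; simp
  have e3 : (Dm F x)ᵀ * dk x Q * Dm F x = dM F * (Q * dM F) := by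
    rw [← DD hn x]; simp only [dk, Matrix.mul_assoc]
  rw [f1, nf, Matrix.mul_add, Matrix.mul_add, Matrix.add_mul, Matrix.add_mul, e2, e3, add_zero,
    Matrix.mul_smul, Matrix.smul_mul, e1, Matrix.mul_add, Matrix.mul_smul, ← Matrix.mul_assoc,
    ← Matrix.mul_assoc, di_mul h2 h3, Matrix.one_mul, Matrix.one_mul]

theorem Pm_sq (h3 : (3 : F) ≠ 0) (hn : (Fintype.card G : F) = 4) :
    Pm F G * Pm F G = Pm F G := by
  ext g h
  simp only [Matrix.mul_apply, Pm, Matrix.of_apply]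
  conv_lhs => enter [2, u]; rw [pr_symm g u]
  exact sum_pr_pr h3 hn g h

theorem sub_kron (a : G) (ha : a ≠ 1) (A : Matrix (Fin 6) (Fin 6) F) :
    (A ⊗ₖ Pm F G).submatrix (fun i => (i, a)) (fun i => (i, a)) = (1 - 1 / 3 : F) • A := by
  ext i j
  simp [Pm, pr, ha, mul_comm]

theorem sub_kron' (h2 : (2 : F) ≠ 0) (h3 : (3 : F) ≠ 0) (a : G) (ha : a ≠ 1)
    (A : Matrix (Fin 6) (Fin 6) F) :
    (3 / 2 : F) • (gi F * ((kM F)ᵀ *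
      (A ⊗ₖ Pm F G).submatrix (fun i => (i, a)) (fun i => (i, a)) * kM F))
      = gi F * ((kM F)ᵀ * A * kM F) := by
  rw [sub_kron a ha]
  simp only [Matrix.mul_smul, Matrix.smul_mul, smul_smul]
  have : (3 / 2 * (1 - 1 / 3) : F) = 1 := by field_simp; norm_num
  rw [this, one_smul]

theorem f2_nf (h2 : (2 : F) ≠ 0) (h3 : (3 : F) ≠ 0) (hn : (Fintype.card G : F) = 4)
    (hsq : ∀ a : G, a * a = 1) (x : XG G) (a : G) (ha : a ≠ 1)
    (c : F) (P : Matrix (Fin 6) (Fin 6) F) (Q : Matrix (Fin 5) (Fin 5) F) :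
    f2 x a (nf x c P Q)
      = gi F * ((kM F)ᵀ * (c • (gM F * eA F 4) + gM F * P * gM F) * kM F) := by
  have e1 : (Lm F x)ᵀ * Em F x 4 * Lm F x = (gM F * eA F 4) ⊗ₖ Pm F G := by
    rw [Matrix.mul_assoc, EL, ← Matrix.mul_assoc, LL h3 hn hsq, ← Matrix.mul_kronecker_mul,
      Matrix.mul_one]
  have e2 : (Lm F x)ᵀ * lk x P * Lm F x = (gM F * P * gM F) ⊗ₖ Pm F G := by
    calc (Lm F x)ᵀ * lk x P * Lm F x
        = ((Lm F x)ᵀ * Lm F x) * (P ⊗ₖ (1 : Matrix G G F)) * ((Lm F x)ᵀ * Lm F x) := by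
          simp only [lk, Matrix.mul_assoc]
      _ = _ := by
          rw [LL h3 hn hsq, ← Matrix.mul_kronecker_mul, ← Matrix.mul_kronecker_mul,
            Matrix.mul_one, Pm_sq h3 hn]
  have e3 : (Lm F x)ᵀ * dk x Q * Lm F x = 0 := by
    rw [dk, ← Matrix.mul_assoc, ← Matrix.mul_assoc, LD h3 hn hsq]; simp
  have e4 : (Lm F x)ᵀ * nf x c P Q * Lm F x
      = (c • (gM F * eA F 4) + gM F * P * gM F) ⊗ₖ Pm F G := by
    rw [nf, Matrix.mul_add, Matrix.mul_add, Matrix.add_mul, Matrix.add_mul, e2, e3, add_zero,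
      Matrix.mul_smul, Matrix.smul_mul, e1, Matrix.add_kronecker, Matrix.smul_kronecker]
  rw [f2, e4, sub_kron' h2 h3 a ha]

theorem f2_one (h2 : (2 : F) ≠ 0) (h3 : (3 : F) ≠ 0) (hn : (Fintype.card G : F) = 4)
    (hsq : ∀ a : G, a * a = 1) (x : XG G) (a : G) (ha : a ≠ 1) :
    f2 x a (1 : Matrix (XG G) (XG G) F) = 1 := by
  rw [f2, Matrix.mul_one, LL h3 hn hsq, sub_kron' h2 h3 a ha, gi_mul h3]

theorem f1_one (h2 : (2 : F) ≠ 0) (h3 : (3 : F) ≠ 0) (hn : (Fintype.card G : F) = 4)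
    (x : XG G) : f1 x (1 : Matrix (XG G) (XG G) F) = 1 := by
  rw [f1, Matrix.mul_one, DD hn, di_mul h2 h3]

/-- multiplicativity in the second block -/
theorem block2 (h3 : (3 : F) ≠ 0) (c c' : F) (P P' : Matrix (Fin 6) (Fin 6) F) :
    gi F * ((kM F)ᵀ * (c • (gM F * eA F 4) + gM F * P * gM F) * kM F) *
      (gi F * ((kM F)ᵀ * (c' • (gM F * eA F 4) + gM F * P' * gM F) * kM F))
    = gi F * ((kM F)ᵀ * ((c * c') • (gM F * eA F 4) + gM F * (c • (eA F 4 * P') +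
      c' • (P * eA F 4) + P * gM F * P') * gM F) * kM F) := by
  have g := ghg (F := F) h3
  have t1 : c • (gM F * eA F 4) + gM F * P * gM F = (c • eA F 4 + gM F * P) * gM F := by
    rw [Matrix.add_mul, Matrix.smul_mul, eA_comm]
  have t2 : c' • (gM F * eA F 4) + gM F * P' * gM F = gM F * (c' • eA F 4 + P' * gM F) := by
    rw [Matrix.mul_add, Matrix.mul_smul, Matrix.mul_assoc]
  have t3 : (c • eA F 4 + gM F * P) * gM F * (c' • eA F 4 + P' * gM F)
      = (c * c') • (gM F * eA F 4) + gM F * (c • (eA F 4 * P') +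
      c' • (P * eA F 4) + P * gM F * P') * gM F := by
    have i1 : eA F 4 * gM F * eA F 4 = gM F * eA F 4 := by
      rw [eA_comm, Matrix.mul_assoc, eA_sq]
    have i2 : eA F 4 * gM F * (P' * gM F) = gM F * (eA F 4 * P') * gM F := by
      rw [eA_comm]; simp only [Matrix.mul_assoc]
    have i3 : gM F * P * gM F * eA F 4 = gM F * (P * eA F 4) * gM F := by
      rw [Matrix.mul_assoc (gM F * P), ← eA_comm]; simp only [Matrix.mul_assoc]
    have i4 : gM F * P * gM F * (P' * gM F) = gM F * (P * gM F * P') * gM F := by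
      simp only [Matrix.mul_assoc]
    simp only [Matrix.add_mul, Matrix.mul_add, Matrix.smul_mul, Matrix.mul_smul, i1, i2, i3, i4,
      smul_smul]
    rw [smul_add, smul_smul, mul_comm c' c]
    abel
  rw [t1, t2, ← t3]
  calc _ = gi F * (kM F)ᵀ * (c • eA F 4 + gM F * P) * (gM F * (kM F * gi F * (kM F)ᵀ) * gM F)
          * (c' • eA F 4 + P' * gM F) * kM F := by simp only [Matrix.mul_assoc]
    _ = _ := by rw [kgk, g]; simp only [Matrix.mul_assoc]

theorem block1 (c c' : F) (Q Q' : Matrix (Fin 5) (Fin 5) F) :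
    (c • eB F 4 + Q * dM F) * (c' • eB F 4 + Q' * dM F) = (c * c') • eB F 4 +
      (c • (eB F 4 * Q') + c' • (Q * eB F 4) + Q * dM F * Q') * dM F := by
  have i3 : Q * dM F * eB F 4 = Q * eB F 4 * dM F := by
    rw [Matrix.mul_assoc, ← eB_comm, Matrix.mul_assoc]
  simp only [Matrix.add_mul, Matrix.mul_add, Matrix.smul_mul, Matrix.mul_smul, eB_sq, i3,
    Matrix.mul_assoc, smul_smul, smul_add]
  simp only [← Matrix.mul_assoc, i3]
  rw [mul_comm c' c]
  abel

theorem exists_sgn (hsq : ∀ a : G, a * a = 1) (hc : ∀ a b : G, a * b = b * a) (x : XG G)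
    (a b : G) (ha : a ≠ 1) (hb : b ≠ 1) (hab : a ≠ b) :
    ∃ (s : XG G → F) (y : XG G), s y = 1 ∧ Em F x 4 *ᵥ s = s ∧ (Lm F x)ᵀ *ᵥ s = 0 ∧
      (Dm F x)ᵀ *ᵥ s = 0 := by
  have h1 : a * (a * b) = b := by rw [← mul_assoc, hsq, one_mul]
  have h2 : b * (a * b) = a := by rw [hc a b, ← mul_assoc, hsq, one_mul]
  have h3 : a * b * a = b := by rw [hc, h1]
  have h4 : a * b * b = a := by rw [hc, h2]
  have h5 : b * a = a * b := hc _ _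
  have n1 : a * b ≠ 1 := fun h => hab (by rw [← h4, h, one_mul])
  have n2 : a * b ≠ a := fun h => hb (by simpa using h)
  have n3 : a * b ≠ b := fun h => ha (by simpa using h)
  let q : G × G → XG G := coordEquiv x
  let δ : G × G → XG G → F := fun p => Pi.single (q p) 1
  have hk : ∀ u v : G, u ≠ 1 → v ≠ 1 → u ≠ v → ks x (q (u, v)) = 4 := by
    intro u v h h' h''
    simp [ks, q, cx_coord, cy_coord, kl, h, h', h'']
  have c1 := hk a b ha hb hab
  have c2 := hk b (a * b) hb n1 n3.symm
  have c3 := hk (a * b) a n1 ha n2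
  have c4 := hk b a hb ha hab.symm
  have c5 := hk (a * b) b n1 hb n3
  have c6 := hk a (a * b) ha n1 n2.symm
  have hE : ∀ p, ks x (q p) = 4 → Em F x 4 *ᵥ δ p = δ p := by
    intro p hp
    ext y
    simp only [Em, Matrix.mulVec_diagonal, δ]
    by_cases h : y = q p
    · subst h; simp [hp]
    · simp [h]
  refine ⟨δ (a, b) + δ (b, a * b) + δ (a * b, a) - δ (b, a) - δ (a * b, b) - δ (a, a * b),
    q (a, b), ?_, ?_, ?_, ?_⟩
  · have hq : ∀ p p', δ p (q p') = if p' = p then 1 else 0 := by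
      intro p p'
      simp [δ, Pi.single_apply, q]
    simp [hq, hab, n2.symm, n3.symm, hab.symm]
  · simp only [Matrix.mulVec_add, Matrix.mulVec_sub, hE _ c1, hE _ c2, hE _ c3, hE _ c4, hE _ c5,
      hE _ c6]
  · ext ⟨α, g⟩
    simp only [Matrix.mulVec_add, Matrix.mulVec_sub, δ, Matrix.mulVec_single_one, Pi.add_apply,
      Pi.sub_apply, Matrix.col_apply, Matrix.transpose_apply, Lm, Matrix.of_apply, c1, c2, c3, c4,
      c5, c6]
    simp only [q, cx_coord, cy_coord]
    fin_cases α <;> simp [cA, lb, h1, h2, h3, h4, h5]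
    all_goals ring
  · ext i
    simp only [Matrix.mulVec_add, Matrix.mulVec_sub, δ, Matrix.mulVec_single_one, Pi.add_apply,
      Pi.sub_apply, Matrix.col_apply, Matrix.transpose_apply, Dm, Matrix.of_apply, c1, c2, c3, c4,
      c5, c6]
    simp

end Aux

theorem stmt18 (F : Type) [Field F] (G : Type) [Group G] [Fintype G] [DecidableEq G]
    (hp2 : ringChar F ≠ 2) (hp3 : ringChar F ≠ 3)
    (helem : ∀ a : G, a ^ 2 = 1) (hcard : 3 ≤ Fintype.card G)
    (hn : (Fintype.card G : F) = 4) (x : XG G) :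
    ∃ φ : TerwilligerAlg F G x →ₐ[F]
        (Matrix (Fin 5) (Fin 5) F × Matrix (Fin 5) (Fin 5) F × F),
      Function.Surjective φ ∧
      ∃ m : ℕ, 1 ≤ m ∧
        ∀ f : Fin m → TerwilligerAlg F G x,
          (∀ j, φ (f j) = 0) → (List.ofFn f).prod = 0 := by
  have h2 : (2 : F) ≠ 0 := Ring.two_ne_zero hp2
  have h3 : (3 : F) ≠ 0 := by
    intro h
    have : ringChar F ∣ 3 := by
      rw [← ringChar.spec]; exact_mod_cast h
    rcases (Nat.dvd_prime Nat.prime_three).1 this with h | h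
    · exact CharP.ringChar_ne_one h
    · exact hp3 h
  have hsq : ∀ a : G, a * a = 1 := fun a => by rw [← pow_two]; exact helem a
  have hinv : ∀ a : G, a⁻¹ = a := fun a => inv_eq_of_mul_eq_one_left (hsq a)
  have hc : ∀ a b : G, a * b = b * a := fun a b => by
    rw [← hinv (a * b), _root_.mul_inv_rev, hinv, hinv]
  obtain ⟨a, b, ha, hb, hab⟩ : ∃ a b : G, a ≠ 1 ∧ b ≠ 1 ∧ a ≠ b := by
    obtain ⟨u, v, w, h1, h2, h3⟩ := Fintype.two_lt_card_iff.1 hcard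
    by_cases hu : u = 1
    · exact ⟨v, w, fun h => h1 (hu.trans h.symm), fun h => h2 (hu.trans h.symm), h3⟩
    · by_cases hv : v = 1
      · exact ⟨u, w, hu, fun h => h3 (hv.trans h.symm), h2⟩
      · exact ⟨u, v, hu, hv, h1⟩
  obtain ⟨s, y, hs1, hsE, hsL, hsD⟩ := exists_sgn (F := F) hsq hc x a b ha hb hab
  have f3_nf : ∀ c P Q, (nf x c P Q *ᵥ s) y = c := by
    intro c P Q
    have e1 : lk x P *ᵥ s = 0 := by rw [lk, ← Matrix.mulVec_mulVec, hsL, Matrix.mulVec_zero]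
    have e2 : dk x Q *ᵥ s = 0 := by rw [dk, ← Matrix.mulVec_mulVec, hsD, Matrix.mulVec_zero]
    rw [nf, Matrix.add_mulVec, Matrix.add_mulVec, e1, e2, Matrix.smul_mulVec, hsE]
    simp [hs1]
  have hsa : ∀ A B : Matrix (Fin 6 × G) (Fin 6 × G) F,
      (A + B).submatrix (fun i : Fin 6 => (i, a)) (fun i : Fin 6 => (i, a)) =
      A.submatrix (fun i => (i, a)) (fun i => (i, a)) +
      B.submatrix (fun i => (i, a)) (fun i => (i, a)) := fun _ _ => rfl
  have hss : ∀ (r : F) (A : Matrix (Fin 6 × G) (Fin 6 × G) F),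
      (r • A).submatrix (fun i : Fin 6 => (i, a)) (fun i : Fin 6 => (i, a)) =
      r • A.submatrix (fun i => (i, a)) (fun i => (i, a)) := fun _ _ => rfl
  let Φ : Matrix (XG G) (XG G) F →ₗ[F]
      (Matrix (Fin 5) (Fin 5) F × Matrix (Fin 5) (Fin 5) F × F) :=
    { toFun := fun M => (f1 x M, f2 x a M, (M *ᵥ s) y)
      map_add' := by
        intro M N
        simp [f1, f2, Matrix.mul_add, Matrix.add_mul, Matrix.add_mulVec, hsa]
      map_smul' := by
        intro r M
        simp only [f1, f2, Matrix.smul_mulVec, hss, Matrix.mul_smul, Matrix.smul_mul,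
          smul_comm r (3 / 2 : F), RingHom.id_apply, Prod.smul_mk, Pi.smul_apply] }
  have Φ_nf : ∀ c P Q, Φ (nf x c P Q) = (c • eB F 4 + Q * dM F,
      gi F * ((kM F)ᵀ * (c • (gM F * eA F 4) + gM F * P * gM F) * kM F), c) := by
    intro c P Q
    change (f1 x (nf x c P Q), f2 x a (nf x c P Q), (nf x c P Q *ᵥ s) y) = _
    rw [f1_nf h2 h3 hn hsq, f2_nf h2 h3 hn hsq x a ha, f3_nf]
  let φ : TerwilligerAlg F G x →ₐ[F]
        (Matrix (Fin 5) (Fin 5) F × Matrix (Fin 5) (Fin 5) F × F) :=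
    AlgHom.ofLinearMap (Φ.comp (TerwilligerAlg F G x).val.toLinearMap)
      (by
        change (f1 x 1, f2 x a 1, ((1 : Matrix (XG G) (XG G) F) *ᵥ s) y) = _
        rw [f1_one h2 h3 hn, f2_one h2 h3 hn hsq x a ha, Matrix.one_mulVec, hs1]
        rfl)
      (by
        rintro ⟨M, hM⟩ ⟨N, hN⟩
        change Φ (M * N) = Φ M * Φ N
        obtain ⟨c, P, Q, rfl⟩ := IsNF.of_mem h3 hn hsq hc x hM
        obtain ⟨c', P', Q', rfl⟩ := IsNF.of_mem h3 hn hsq hc x hN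
        rw [nf_mul h3 hn hsq, Φ_nf, Φ_nf, Φ_nf, Prod.mk_mul_mk, Prod.mk_mul_mk, block2 h3, block1])
  have φ_eq : ∀ M : TerwilligerAlg F G x, φ M = Φ M.1 := fun M => rfl
  refine ⟨φ, ?_, 3, by norm_num, ?_⟩
  · rintro ⟨Y, Z, c⟩
    let Q := (Y - c • eB F 4) * di F
    let R := (Z - gi F * ((kM F)ᵀ * (c • (gM F * eA F 4)) * kM F)) * gi F
    refine ⟨⟨nf x c (kM F * R * (kM F)ᵀ) Q, nf_mem h3 hn hsq hc x _ _ _⟩, ?_⟩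
    rw [φ_eq, Φ_nf]
    have e1 : c • eB F 4 + Q * dM F = Y := by
      simp only [Q]
      rw [Matrix.mul_assoc, di_mul h2 h3, Matrix.mul_one]; abel
    have e2 : gi F * ((kM F)ᵀ * (gM F * (kM F * R * (kM F)ᵀ) * gM F) * kM F)
        = Z - gi F * ((kM F)ᵀ * (c • (gM F * eA F 4)) * kM F) := by
      calc _ = gi F * ((kM F)ᵀ * gM F * kM F) * R * ((kM F)ᵀ * gM F * kM F) := by
            simp only [Matrix.mul_assoc]
        _ = _ := by
            rw [gi_mul h3, Matrix.one_mul]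
            simp only [R]
            rw [Matrix.mul_assoc, gi_mul h3, Matrix.mul_one]
    rw [e1, Matrix.mul_add, Matrix.add_mul, Matrix.mul_add, e2]
    congr 2
    abel
  · intro f hf
    have key : ∀ j, ∃ P, (f j).1 = lk x P ∧ gM F * P * gM F = 0 := by
      intro j
      obtain ⟨c, P, Q, h⟩ := IsNF.of_mem h3 hn hsq hc x (f j).2
      have hj := hf j
      rw [φ_eq, h, Φ_nf] at hj
      obtain ⟨i1, i2⟩ := Prod.mk.inj hj
      obtain ⟨i2, i3⟩ := Prod.mk.inj i2
      have i3 : c = 0 := i3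
      subst i3
      rw [zero_smul, zero_add] at i1 i2
      have hQ : Q = 0 := by
        rw [← Matrix.mul_one Q, ← mul_di h2 h3, ← Matrix.mul_assoc]
        change Q * dM F * di F = 0
        rw [show Q * dM F = 0 from i1, Matrix.zero_mul]
      refine ⟨P, by rw [h, hQ]; simp [nf, dk_zero], ?_⟩
      have i4 : gi F * ((kM F)ᵀ * (gM F * P * gM F) * kM F) = 0 := i2
      calc gM F * P * gM F = (gM F * hM F * gM F) * P * (gM F * hM F * gM F) := by
            rw [ghg h3]
        _ = gM F * kM F * (gi F * ((kM F)ᵀ * (gM F * P * gM F) * kM F)) * gi F * (kM F)ᵀ * gM F := by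
            rw [← kgk]; simp only [Matrix.mul_assoc]
        _ = 0 := by rw [i4]; simp
    obtain ⟨P0, e0, _⟩ := key 0
    obtain ⟨P1, e1, z1⟩ := key 1
    obtain ⟨P2, e2, _⟩ := key 2
    apply Subtype.ext
    simp only [List.ofFn_succ, List.ofFn_zero, List.prod_cons, List.prod_nil]
    change (f 0).1 * ((f 1).1 * ((f 2).1 * 1)) = 0
    rw [e0, e1, e2, mul_one, lk_mul_lk h3 hn hsq, lk_mul_lk h3 hn hsq]
    have : P0 * gM F * (P1 * gM F * P2) = P0 * (gM F * P1 * gM F) * P2 := by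
      simp only [Matrix.mul_assoc]
    rw [this, z1, Matrix.mul_zero, Matrix.zero_mul, lk_zero]
end
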